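/- arXiv:2402.10281 — 3 statements merged into one kernel-verified Lean document; each statement's English description precedes it below -/
import Mathlib

section
/- Fix an integer n ≥ 1 and set h = 1/n and x_i = i·h (i = 0,…,n). For an integrable w : [0,1] → ℝ set σ(w)² := (1/n)·Σ_{i=1}^n ( (1/h)·∫_{x_{i−1}}^{x_i} w(x) dx )² − ( ∫_0^1 w(x) dx )². Let ε > 0 and b₁ > 0 satisfy ε² + h²/π² ≤ (ε + h·b₁)². Then for every u ∈ C¹([0,1]) with u(0) = u(1) = 0, setting ū := ∫_0^1 u(x) dx: ε²·∫_0^1 (u′(x))² dx + ∫_0^1 (u(x) − ū)² dx ≤ (ε + h·b₁)²·∫_0^1 (u′(x))² dx + σ(u)². -/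
/-!
The heart of the matter is the sharp Poincaré inequality on an interval of length `L`,
`∫ v² - (∫ v)² / L ≤ (L / π)² ∫ v'²`. Applied on each of the `n` cells (`L = 1 / n`) and summed,
it bounds `∫ (u - ū)² - σ(u)²` by `(h / π)² ∫ u'²`, which is exactly what the restriction on
`ε, b₁` absorbs.

The Poincaré inequality is obtained without Fourier series. For `V` vanishing at both endpoints
and `k L < π`, with `m` the midpoint, the identity
`V'² - k² V² = (V' + k tan (k (x - m)) V)² - (k tan (k (x - m)) V²)'`
gives `k² ∫ V² ≤ ∫ V'²` (`dirichlet_ineq`). If `v` has mean zero, its primitive `V` vanishes at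
both endpoints, and `∫ v² = -∫ V v' ≤ (k² ∫ V² + k⁻² ∫ v'²) / 2 ≤ (∫ v² + k⁻² ∫ v'²) / 2`, so
`k² ∫ v² ≤ ∫ v'²` (`neumann_ineq_aux`). Finally `k` tends to `π / L`.
-/

/-- The square of the discrete seminorm `|u|_{*,h} = |P_h T u|`. -/
noncomputable def sigmaSq (n : ℕ) (w : ℝ → ℝ) : ℝ :=
  (1 / (n : ℝ)) * ∑ i ∈ Finset.range n,
      ((n : ℝ) * ∫ x in ((i : ℝ) / n)..(((i : ℝ) + 1) / n), w x) ^ 2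
    - (∫ x in (0:ℝ)..1, w x) ^ 2

open Set MeasureTheory intervalIntegral

/-- Wirtinger's inequality for functions vanishing at both endpoints, below the optimal
constant: for `k (b - a) < π` the weight `tan (k (x - m))`, with `m` the midpoint, is smooth on
`[a, b]`. -/
lemma dirichlet_ineq {a b k : ℝ} (hab : a < b) (hk : 0 ≤ k) (hkb : k * (b - a) < Real.pi)
    {V v : ℝ → ℝ} (hV : ContinuousOn V (Icc a b)) (hv : ContinuousOn v (Icc a b))
    (hd : ∀ x ∈ Ioo a b, HasDerivAt V (v x) x) (ha : V a = 0) (hb : V b = 0) :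
    k ^ 2 * ∫ x in a..b, V x ^ 2 ≤ ∫ x in a..b, v x ^ 2 := by
  set m := (a + b) / 2 with hm
  have hcos : ∀ x ∈ Icc a b, Real.cos (k * (x - m)) ≠ 0 := by
    intro x hx
    apply ne_of_gt
    apply Real.cos_pos_of_mem_Ioo
    have h1 : k * (x - m) ≤ k * ((b - a) / 2) :=
      mul_le_mul_of_nonneg_left (by rw [hm]; linarith [hx.2]) hk
    have h2 : k * (-((b - a) / 2)) ≤ k * (x - m) :=
      mul_le_mul_of_nonneg_left (by rw [hm]; linarith [hx.1]) hk
    constructor <;> nlinarith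
  have ht : ContinuousOn (fun x => Real.tan (k * (x - m))) (Icc a b) := by
    intro x hx
    have h1 : ContinuousAt Real.tan (k * (x - m)) := Real.continuousAt_tan.2 (hcos x hx)
    have h2 : ContinuousAt (fun x : ℝ => k * (x - m)) x := by fun_prop
    exact (ContinuousAt.comp (f := fun x : ℝ => k * (x - m)) h1 h2).continuousWithinAt
  set t := fun x => Real.tan (k * (x - m)) with htdef
  have htd : ∀ x ∈ Icc a b, HasDerivAt t (k * (1 + t x ^ 2)) x := by
    intro x hx
    have h1 := Real.hasDerivAt_tan (hcos x hx)
    have h2 : HasDerivAt (fun x : ℝ => k * (x - m)) (k * 1) x :=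
      ((hasDerivAt_id x).sub_const m).const_mul k
    have h3 := HasDerivAt.comp x h1 h2
    refine h3.congr_deriv ?_
    have hc := hcos x hx
    simp only [htdef, Real.tan_eq_sin_div_cos]
    field_simp
    rw [Real.cos_sq_add_sin_sq, mul_one]
  have hG : ∫ x in a..b, (k * (k * (1 + t x ^ 2)) * V x ^ 2 + k * t x * (2 * V x * v x)) = 0 := by
    rw [integral_eq_sub_of_hasDerivAt_of_le (f := fun x => k * t x * V x ^ 2) hab.le]
    · simp [ha, hb]
    · fun_prop
    · intro x hx
      have := ((htd x (Ioo_subset_Icc_self hx)).const_mul k).mul ((hd x hx).pow 2)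
      refine this.congr_deriv ?_
      simp
    · apply ContinuousOn.intervalIntegrable_of_Icc hab.le
      fun_prop
  have hi1 : IntervalIntegrable (fun x => v x ^ 2) volume a b :=
    ContinuousOn.intervalIntegrable_of_Icc hab.le (by fun_prop)
  have hi2 : IntervalIntegrable (fun x => k ^ 2 * V x ^ 2) volume a b :=
    ContinuousOn.intervalIntegrable_of_Icc hab.le (by fun_prop)
  have hi3 : IntervalIntegrable
      (fun x => k * (k * (1 + t x ^ 2)) * V x ^ 2 + k * t x * (2 * V x * v x)) volume a b :=
    ContinuousOn.intervalIntegrable_of_Icc hab.le (by fun_prop)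
  have key : 0 ≤ ∫ x in a..b, (v x ^ 2 - k ^ 2 * V x ^ 2 +
      (k * (k * (1 + t x ^ 2)) * V x ^ 2 + k * t x * (2 * V x * v x))) := by
    apply integral_nonneg hab.le
    intro x _
    have : v x ^ 2 - k ^ 2 * V x ^ 2 +
      (k * (k * (1 + t x ^ 2)) * V x ^ 2 + k * t x * (2 * V x * v x))
        = (v x + k * t x * V x) ^ 2 := by ring
    rw [this]
    positivity
  rw [integral_add (hi1.sub hi2) hi3, hG, integral_sub hi1 hi2,
    intervalIntegral.integral_const_mul] at key
  linarith

/-- The Poincaré inequality for functions of mean zero, below the optimal constant, by duality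
with `dirichlet_ineq` for the primitive. -/
lemma neumann_ineq_aux {a b k : ℝ} (hab : a < b) (hk : 0 < k) (hkb : k * (b - a) < Real.pi)
    {v v' : ℝ → ℝ} (hv : ContinuousOn v (Icc a b)) (hv' : ContinuousOn v' (Icc a b))
    (hd : ∀ x ∈ Ioo a b, HasDerivAt v (v' x) x) (hmean : ∫ x in a..b, v x = 0) :
    k ^ 2 * ∫ x in a..b, v x ^ 2 ≤ ∫ x in a..b, v' x ^ 2 := by
  have hvi : IntervalIntegrable v volume a b := hv.intervalIntegrable_of_Icc hab.le
  set V := fun x => ∫ y in a..x, v y with hVdef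
  have hV : ContinuousOn V (Icc a b) := by
    have := continuousOn_primitive_interval' hvi left_mem_uIcc
    rwa [uIcc_of_le hab.le] at this
  have hVd : ∀ x ∈ Ioo a b, HasDerivAt V (v x) x := by
    intro x hx
    apply integral_hasDerivAt_right
    · exact hvi.mono_set (by
        rw [uIcc_of_le hab.le, uIcc_of_le hx.1.le]; exact Icc_subset_Icc_right hx.2.le)
    · exact (hv.mono Ioo_subset_Icc_self).stronglyMeasurableAtFilter isOpen_Ioo x hx
    · exact hv.continuousAt (Icc_mem_nhds hx.1 hx.2)
  have hVa : V a = 0 := by simp [hVdef]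
  have hVb : V b = 0 := hmean
  have h1 := dirichlet_ineq hab hk.le hkb hV hv hVd hVa hVb
  have hparts : ∫ x in a..b, (v x * v x + V x * v' x) = 0 := by
    rw [integral_eq_sub_of_hasDerivAt_of_le (f := fun x => V x * v x) hab.le]
    · simp [hVa, hVb]
    · fun_prop
    · intro x hx
      exact (hVd x hx).mul (hd x hx)
    · exact ContinuousOn.intervalIntegrable_of_Icc hab.le (by fun_prop)
  have hi0 : IntervalIntegrable (fun x => v x * v x + V x * v' x) volume a b :=
    ContinuousOn.intervalIntegrable_of_Icc hab.le (by fun_prop)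
  have hi1 : IntervalIntegrable (fun x => k ^ 2 * (k ^ 2 * V x ^ 2)) volume a b :=
    ContinuousOn.intervalIntegrable_of_Icc hab.le (by fun_prop)
  have hi2 : IntervalIntegrable (fun x => v' x ^ 2) volume a b :=
    ContinuousOn.intervalIntegrable_of_Icc hab.le (by fun_prop)
  have hi3 : IntervalIntegrable (fun x => 2 * k ^ 2 * v x ^ 2) volume a b :=
    ContinuousOn.intervalIntegrable_of_Icc hab.le (by fun_prop)
  have key : 0 ≤ ∫ x in a..b, (k ^ 2 * (k ^ 2 * V x ^ 2) + v' x ^ 2 - 2 * k ^ 2 * v x ^ 2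
      + 2 * k ^ 2 * (v x * v x + V x * v' x)) := by
    apply integral_nonneg hab.le
    intro x _
    have : k ^ 2 * (k ^ 2 * V x ^ 2) + v' x ^ 2 - 2 * k ^ 2 * v x ^ 2
      + 2 * k ^ 2 * (v x * v x + V x * v' x) = (k ^ 2 * V x + v' x) ^ 2 := by ring
    rw [this]
    positivity
  rw [integral_add ((hi1.add hi2).sub hi3) (hi0.const_mul _),
    intervalIntegral.integral_const_mul, hparts,
    integral_sub (hi1.add hi2) hi3, integral_add hi1 hi2,
    intervalIntegral.integral_const_mul, intervalIntegral.integral_const_mul,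
    intervalIntegral.integral_const_mul] at key
  have := mul_le_mul_of_nonneg_left h1 (sq_nonneg k)
  linarith

lemma integral_sub_const_sq {a b c : ℝ} (hab : a ≤ b) {v : ℝ → ℝ} (hv : ContinuousOn v (Icc a b)) :
    ∫ x in a..b, (v x - c) ^ 2
      = (∫ x in a..b, v x ^ 2) - 2 * c * (∫ x in a..b, v x) + (b - a) * c ^ 2 := by
  have hi : IntervalIntegrable v volume a b := hv.intervalIntegrable_of_Icc hab
  have hi2 : IntervalIntegrable (fun x => v x ^ 2) volume a b :=
    ContinuousOn.intervalIntegrable_of_Icc hab (by fun_prop)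
  have : ∀ x, (v x - c) ^ 2 = v x ^ 2 - 2 * c * v x + c ^ 2 := fun x => by ring
  simp_rw [this]
  rw [integral_add (hi2.sub (hi.const_mul _)) (by simp), integral_sub hi2 (hi.const_mul _),
    intervalIntegral.integral_const_mul, intervalIntegral.integral_const, smul_eq_mul]

/-- The sharp Poincaré inequality `∫ (v - v̄)² ≤ (L / π)² ∫ v'²` on an interval of length
`L = b - a`. -/
lemma neumann_ineq {a b : ℝ} (hab : a < b)
    {v v' : ℝ → ℝ} (hv : ContinuousOn v (Icc a b)) (hv' : ContinuousOn v' (Icc a b))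
    (hd : ∀ x ∈ Ioo a b, HasDerivAt v (v' x) x) :
    (∫ x in a..b, v x ^ 2) - (∫ x in a..b, v x) ^ 2 / (b - a)
      ≤ (b - a) ^ 2 / Real.pi ^ 2 * ∫ x in a..b, v' x ^ 2 := by
  have hL : 0 < b - a := sub_pos.2 hab
  set c := (∫ x in a..b, v x) / (b - a) with hc
  have hI : ∫ x in a..b, v x = c * (b - a) := by rw [hc]; field_simp
  have hvi : IntervalIntegrable v volume a b := hv.intervalIntegrable_of_Icc hab.le
  have hmean : ∫ x in a..b, (v x - c) = 0 := by
    rw [integral_sub hvi (by simp), intervalIntegral.integral_const, smul_eq_mul, hI]; ring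
  have hk : ∀ k ∈ Ioo 0 (Real.pi / (b - a)),
      k ^ 2 * ∫ x in a..b, (v x - c) ^ 2 ≤ ∫ x in a..b, v' x ^ 2 := by
    intro k hk
    exact neumann_ineq_aux hab hk.1 ((lt_div_iff₀ hL).1 hk.2) (by fun_prop) hv'
      (fun x hx => (hd x hx).sub_const c) hmean
  have hpos : 0 < Real.pi / (b - a) := div_pos Real.pi_pos hL
  have hlim : (Real.pi / (b - a)) ^ 2 * ∫ x in a..b, (v x - c) ^ 2 ≤ ∫ x in a..b, v' x ^ 2 := by
    have hmem : Real.pi / (b - a) ∈ closure (Ioo 0 (Real.pi / (b - a))) := by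
      rw [closure_Ioo hpos.ne]; exact right_mem_Icc.2 hpos.le
    exact le_on_closure (f := fun k : ℝ => k ^ 2 * ∫ x in a..b, (v x - c) ^ 2)
      (g := fun _ => ∫ x in a..b, v' x ^ 2) hk (by fun_prop) (by fun_prop) hmem
  rw [integral_sub_const_sq hab.le hv, hI] at hlim
  rw [hI]
  have hpi := Real.pi_pos
  have e : (b - a) ^ 2 / Real.pi ^ 2 * ((Real.pi / (b - a)) ^ 2 *
      ((∫ x in a..b, v x ^ 2) - 2 * c * (c * (b - a)) + (b - a) * c ^ 2))
      = (∫ x in a..b, v x ^ 2) - (c * (b - a)) ^ 2 / (b - a) := by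
    field_simp
    ring
  rw [← e]
  gcongr


/-- Comparison of the continuous optimal trial norm with the
(rescaled) discrete optimal trial norm of the bubble upwinding Petrov-Galerkin
method: if `ε² + h²/π² ≤ (ε + hb₁)²` then
`ε²∫(u')² + ∫(u - ū)² ≤ (ε + hb₁)²∫(u')² + σ(u)²`
for all `u ∈ C¹([0,1])` with `u(0) = u(1) = 0`. -/
theorem stmt14 (n : ℕ) (hn : 1 ≤ n) (ε b₁ : ℝ) (hε : 0 < ε) (hb₁ : 0 < b₁)
    (hrestr : ε^2 + (1 / (n : ℝ))^2 / Real.pi^2 ≤ (ε + (1 / (n : ℝ)) * b₁)^2)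
    (u u' : ℝ → ℝ)
    (hu : ∀ x ∈ Set.Icc (0:ℝ) 1, HasDerivWithinAt u (u' x) (Set.Icc 0 1) x)
    (hu' : ContinuousOn u' (Set.Icc 0 1))
    (hu0 : u 0 = 0) (hu1 : u 1 = 0)
    (ubar : ℝ) (hubar : ubar = ∫ x in (0:ℝ)..1, u x) :
    ε^2 * (∫ x in (0:ℝ)..1, (u' x)^2) + (∫ x in (0:ℝ)..1, (u x - ubar)^2) ≤
      (ε + (1 / (n : ℝ)) * b₁)^2 * (∫ x in (0:ℝ)..1, (u' x)^2) + sigmaSq n u := by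
  have hn0 : (0 : ℝ) < n := by exact_mod_cast hn
  have huc : ContinuousOn u (Icc 0 1) := fun x hx => (hu x hx).continuousWithinAt
  have hcell : ∀ i < n, Icc ((i : ℝ) / n) (((i : ℝ) + 1) / n) ⊆ Icc 0 1 := by
    intro i hi
    apply Icc_subset_Icc
    · positivity
    · rw [div_le_one hn0]; exact_mod_cast hi
  have hlt : ∀ i : ℕ, (i : ℝ) / n < ((i : ℝ) + 1) / n := fun i => by gcongr; linarith
  have hsum : ∀ f : ℝ → ℝ, ContinuousOn f (Icc 0 1) →
      ∑ i ∈ Finset.range n, ∫ x in ((i : ℝ) / n)..(((i : ℝ) + 1) / n), f x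
        = ∫ x in (0:ℝ)..1, f x := by
    intro f hf
    have := sum_integral_adjacent_intervals (μ := volume) (f := f)
      (a := fun i : ℕ => (i : ℝ) / n) (n := n) (by
        intro i hi
        push_cast
        exact (hf.mono (hcell i hi)).intervalIntegrable_of_Icc (hlt i).le)
    simpa [hn0.ne'] using this
  have hP : ∀ i ∈ Finset.range n,
      (∫ x in ((i : ℝ) / n)..(((i : ℝ) + 1) / n), u x ^ 2)
        - n * (∫ x in ((i : ℝ) / n)..(((i : ℝ) + 1) / n), u x) ^ 2
      ≤ (1 / (n : ℝ)) ^ 2 / Real.pi ^ 2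
        * ∫ x in ((i : ℝ) / n)..(((i : ℝ) + 1) / n), u' x ^ 2 := by
    intro i hi
    have hc := hcell i (Finset.mem_range.1 hi)
    have h := neumann_ineq (hlt i) (huc.mono hc) (hu'.mono hc) (fun x hx => by
      have h0 := (hc (left_mem_Icc.2 (hlt i).le)).1
      have h1 := (hc (right_mem_Icc.2 (hlt i).le)).2
      exact (hu x (hc (Ioo_subset_Icc_self hx))).hasDerivAt
        (Icc_mem_nhds (h0.trans_lt hx.1) (hx.2.trans_le h1)))
    have hlen : ((i : ℝ) + 1) / n - (i : ℝ) / n = 1 / n := by ring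
    rw [hlen, div_div_eq_mul_div, div_one, mul_comm _ (n : ℝ)] at h
    exact h
  have hS := Finset.sum_le_sum hP
  rw [Finset.sum_sub_distrib, ← Finset.mul_sum, ← Finset.mul_sum,
    hsum (fun x => u x ^ 2) (by fun_prop), hsum (fun x => u' x ^ 2) (by fun_prop)] at hS
  have hsig : sigmaSq n u = n * (∑ i ∈ Finset.range n,
      (∫ x in ((i : ℝ) / n)..(((i : ℝ) + 1) / n), u x) ^ 2) - ubar ^ 2 := by
    unfold sigmaSq
    simp_rw [mul_pow]
    rw [← Finset.mul_sum, ← hubar]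
    field_simp
  rw [integral_sub_const_sq zero_le_one huc, ← hubar, hsig]
  have hnn : 0 ≤ ∫ x in (0:ℝ)..1, u' x ^ 2 :=
    integral_nonneg zero_le_one (fun x _ => sq_nonneg _)
  have := mul_le_mul_of_nonneg_right hrestr hnn
  linarith
end

section
/- Fix an integer n ≥ 2 and set h = 1/n and x_i = i·h (i = 0,…,n). Let M_h denote the space of continuous functions v : [0,1] → ℝ with v(0) = v(1) = 0 that are affine on each subinterval [x_{i−1}, x_i]. Let B : [0,h] → ℝ be continuously differentiable with B(0) = B(h) = 0, ∫_0^h B(x) dx = b₁·h and ∫_0^h (B′(x))² dx = b₂/h, where b₁ > 0 and b₂ > 0. For i = 1,…,n define B_i : [0,1] → ℝ by B_i(x) = B(x − x_{i−1}) for x ∈ [x_{i−1}, x_i] and B_i(x) = 0 otherwise, and set V_h := { w + Σ_{i=1}^n (w(x_i) − w(x_{i−1}))·B_i : w ∈ M_h }. For an integrable w set σ(w)² := (1/n)·Σ_{i=1}^n ( (1/h)·∫_{x_{i−1}}^{x_i} w(x) dx )² − ( ∫_0^1 w(x) dx )². Let ε > 0 satisfy ε² + h²/π² ≤ (ε + h·b₁)²,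 let f : [0,1] → ℝ be continuous, and let u ∈ C²([0,1]) satisfy −ε·u″(x) + u′(x) = f(x) for all x ∈ [0,1] with u(0) = u(1) = 0. If u_h ∈ M_h satisfies ε·∫_0^1 u_h′ v′ dx + ∫_0^1 u_h′ v dx = ∫_0^1 f v dx for all v ∈ V_h, then for every p_h ∈ M_h: (ε + h·b₁)²·∫_0^1 ((u−u_h)′)² dx + σ(u−u_h)² ≤ (1 + b₂)·( (ε + h·b₁)²·∫_0^1 ((u−p_h)′)² dx + σ(u−p_h)² ). -/
/-!
Write `h = 1/n`, `d = ε + h b₁` and `‖e‖² = d² ∫ e'² + σ(e)²`, a quadratic form in `e`.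

For `w ∈ M_h` with bubble modification `v`, the derivative of `v` on the cell starting at `x_i` is
`w' (1 + h B'(· - x_i))`, so `∫ v'² = (1 + b₂) ∫ w'²`. Integrating by parts, the bilinear form is
`b(e, v) = ∫ (ε e' - e + c) v'` for every constant `c`, and for `m ∈ M_h` it is
`b(m, v) = ∫ (d m' - m) w'`. The mean-zero step functions being exactly the derivatives of
elements of `M_h`, some `w` has slopes `d m' - P m + mean m` (with `P` the cell average), and for it
`b(m, v) = ∫ w'² = ‖m‖²`, because `∫ m m' = 0`.

Take `m = u_h - p_h` and `e = u - p_h`. Galerkin orthogonality and Young's inequality give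
`‖m‖² = b(e, v) ≤ √((1 + b₂) ∫ w'²) · √(∫ (ε e' - e + mean e)²)`. The last factor is at most `‖e‖`:
`∫ e e' = 0`, the sharp Poincaré–Wirtinger inequality on each cell gives
`∫ (e - P e)² ≤ (h/π)² ∫ e'²`, and `ε² + h²/π² ≤ d²`. Hence
`‖u_h - p_h‖² ≤ (1 + b₂) ‖u - p_h‖²` for every `p_h` (`projection_stability`).

That the error itself obeys the same bound, with no additional triangle inequality, is the Hilbert
space fact that a projection and its complement have equal norms. Concretely, with `g = u - u_h` and
`K = 1 + b₂`, stability reads `t² ‖m‖² ≤ K ‖g + t m‖²` for all `t`, and at `t = K / (K - 1)` this is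
a positive multiple of `‖g‖² ≤ K ‖g + m‖²`.
-/

/-- The space `M_h` of continuous piecewise linear functions on the uniform
mesh `x_i = i/n` of `[0,1]` vanishing at both endpoints. -/
def InMh (n : ℕ) (v : ℝ → ℝ) : Prop :=
  ContinuousOn v (Set.Icc 0 1) ∧ v 0 = 0 ∧ v 1 = 0 ∧
    ∀ i : ℕ, 1 ≤ i → i ≤ n →
      ∃ a c : ℝ, ∀ x ∈ Set.Icc (((i : ℝ) - 1) / n) ((i : ℝ) / n), v x = a * x + c

/-- The bubble `B_i` supported on `[x_{i-1}, x_i]`, obtained by translating `B`. -/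
noncomputable def bubbleI (n : ℕ) (B : ℝ → ℝ) (i : ℕ) : ℝ → ℝ := fun x =>
  if x ∈ Set.Icc (((i : ℝ) - 1) / n) ((i : ℝ) / n) then B (x - ((i : ℝ) - 1) / n) else 0

/-- The bubble modification `w + Σ_{i=1}^n (w(x_i) - w(x_{i-1})) B_i` of `w`. -/
noncomputable def bubbleMod (n : ℕ) (B : ℝ → ℝ) (w : ℝ → ℝ) : ℝ → ℝ := fun x =>
  w x + ∑ i ∈ Finset.Icc 1 n, (w ((i : ℝ) / n) - w (((i : ℝ) - 1) / n)) * bubbleI n B i x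

/-! ### Calculus on one interval -/

theorem ftc_Icc {a b : ℝ} (hab : a ≤ b) {F F' : ℝ → ℝ}
    (hF : ∀ x ∈ Set.Icc a b, HasDerivWithinAt F (F' x) (Set.Icc a b) x)
    (hc : ContinuousOn F' (Set.Icc a b)) : ∫ x in a..b, F' x = F b - F a := by
  refine intervalIntegral.integral_eq_sub_of_hasDerivAt_of_le hab
    (fun x hx => (hF x hx).continuousWithinAt) (fun x hx => ?_)
    (hc.intervalIntegrable_of_Icc hab)
  exact (hF x (Set.Ioo_subset_Icc_self hx)).hasDerivAt (Icc_mem_nhds hx.1 hx.2)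

theorem integral_lin3 {a b : ℝ} (hab : a ≤ b) {f g k : ℝ → ℝ} (α β γ : ℝ)
    (hf : ContinuousOn f (Set.Icc a b)) (hg : ContinuousOn g (Set.Icc a b))
    (hk : ContinuousOn k (Set.Icc a b)) :
    ∫ x in a..b, (α * f x + β * g x + γ * k x) =
      α * (∫ x in a..b, f x) + β * (∫ x in a..b, g x) + γ * ∫ x in a..b, k x := by
  have hf' := (hf.intervalIntegrable_of_Icc hab (μ := MeasureTheory.volume)).const_mul α
  have hg' := (hg.intervalIntegrable_of_Icc hab (μ := MeasureTheory.volume)).const_mul β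
  have hk' := (hk.intervalIntegrable_of_Icc hab (μ := MeasureTheory.volume)).const_mul γ
  rw [intervalIntegral.integral_add (hf'.add hg') hk', intervalIntegral.integral_add hf' hg']
  simp only [intervalIntegral.integral_const_mul]

/-- The Dirichlet–Poincaré inequality with any constant `k < π / (b - a)`. With `m` the midpoint,
`T(x) = tan (k (x - m))` is smooth on `[a, b]`, and expanding `0 ≤ ∫ (G' + k T G)²` gives the
claim, since `k² T² - k² (1 + T²) = -k²` and `T G²` vanishes at both endpoints. -/
theorem dirichlet_poincare_aux {a b : ℝ} (hab : a < b) {G g : ℝ → ℝ}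
    (hG : ∀ x ∈ Set.Icc a b, HasDerivWithinAt G (g x) (Set.Icc a b) x)
    (hg : ContinuousOn g (Set.Icc a b)) (ha : G a = 0) (hb : G b = 0)
    {k : ℝ} (hk : 0 < k) (hk' : k * (b - a) < Real.pi) :
    k ^ 2 * ∫ x in a..b, (G x) ^ 2 ≤ ∫ x in a..b, (g x) ^ 2 := by
  set m := (a + b) / 2 with hm
  set T : ℝ → ℝ := fun x => Real.tan (k * (x - m)) with hT
  have hcos : ∀ x ∈ Set.Icc a b, Real.cos (k * (x - m)) ≠ 0 := by
    intro x hx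
    refine (Real.cos_pos_of_mem_Ioo ⟨?_, ?_⟩).ne'
    · have : k * (a - m) ≤ k * (x - m) := by gcongr; exact hx.1
      have : k * (a - m) = -(k * (b - a)) / 2 := by rw [hm]; ring
      linarith
    · have : k * (x - m) ≤ k * (b - m) := by gcongr; exact hx.2
      have : k * (b - m) = (k * (b - a)) / 2 := by rw [hm]; ring
      linarith
  have hTd : ∀ x ∈ Set.Icc a b,
      HasDerivWithinAt T (k * (1 + T x ^ 2)) (Set.Icc a b) x := by
    intro x hx
    have h1 : HasDerivAt (fun x : ℝ => k * (x - m)) (k * 1) x :=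
      ((hasDerivAt_id x).sub_const m).const_mul k
    have h2 := (Real.hasDerivAt_tan (hcos x hx)).comp x h1
    refine (h2.congr_deriv ?_).hasDerivWithinAt
    have : 1 + T x ^ 2 = 1 / Real.cos (k * (x - m)) ^ 2 := by
      rw [hT]; simp only; rw [Real.tan_eq_sin_div_cos]
      have := hcos x hx
      field_simp
      linarith [Real.sin_sq_add_cos_sq (k * (x - m))]
    rw [this]; ring
  have hTc : ContinuousOn T (Set.Icc a b) := fun x hx => (hTd x hx).continuousWithinAt
  have hGc : ContinuousOn G (Set.Icc a b) := fun x hx => (hG x hx).continuousWithinAt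
  have hF : ∀ x ∈ Set.Icc a b, HasDerivWithinAt (fun x => k * (T x * G x ^ 2))
      (k * (k * (1 + T x ^ 2) * G x ^ 2 + T x * (2 * G x * g x))) (Set.Icc a b) x := by
    intro x hx
    have h := ((hTd x hx).mul ((hG x hx).pow 2)).const_mul k
    refine h.congr_deriv ?_
    simp
  have h1 := ftc_Icc hab.le hF (by fun_prop)
  simp only [ha, hb] at h1
  have h2 : 0 ≤ ∫ x in a..b, (g x + k * T x * G x) ^ 2 :=
    intervalIntegral.integral_nonneg hab.le fun x _ => sq_nonneg _
  have h3 : ∫ x in a..b, (g x + k * T x * G x) ^ 2 =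
      ∫ x in a..b, (1 * (g x) ^ 2 + (-k ^ 2) * (G x) ^ 2 +
        1 * (k * (k * (1 + T x ^ 2) * G x ^ 2 + T x * (2 * G x * g x)))) := by
    congr 1; ext x; ring
  rw [integral_lin3 hab.le _ _ _ (by fun_prop) (by fun_prop) (by fun_prop), h1] at h3
  linarith

theorem dirichlet_poincare {a b : ℝ} (hab : a < b) {G g : ℝ → ℝ}
    (hG : ∀ x ∈ Set.Icc a b, HasDerivWithinAt G (g x) (Set.Icc a b) x)
    (hg : ContinuousOn g (Set.Icc a b)) (ha : G a = 0) (hb : G b = 0) :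
    ∫ x in a..b, (G x) ^ 2 ≤ ((b - a) / Real.pi) ^ 2 * ∫ x in a..b, (g x) ^ 2 := by
  have hba : 0 < b - a := sub_pos.2 hab
  have hpi := Real.pi_pos
  have key : (Real.pi / (b - a)) ^ 2 * (∫ x in a..b, (G x) ^ 2) ≤ ∫ x in a..b, (g x) ^ 2 := by
    have hlim : Filter.Tendsto (fun k : ℝ => k ^ 2 * ∫ x in a..b, (G x) ^ 2)
        (nhdsWithin (Real.pi / (b - a)) (Set.Iio (Real.pi / (b - a))))
        (nhds ((Real.pi / (b - a)) ^ 2 * ∫ x in a..b, (G x) ^ 2)) :=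
      (Continuous.tendsto (by fun_prop) _).mono_left nhdsWithin_le_nhds
    refine le_of_tendsto hlim ?_
    filter_upwards [Ioo_mem_nhdsLT (show (0 : ℝ) < Real.pi / (b - a) by positivity)] with k hk
    exact dirichlet_poincare_aux hab hG hg ha hb hk.1 ((lt_div_iff₀ hba).1 hk.2)
  have : ∫ x in a..b, (G x) ^ 2 =
      ((b - a) / Real.pi) ^ 2 * ((Real.pi / (b - a)) ^ 2 * (∫ x in a..b, (G x) ^ 2)) := by
    field_simp
  rw [this]
  gcongr

/-- The Poincaré–Wirtinger inequality with its sharp constant. If `G` is the primitive of the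
mean-zero function `e`, then `∫ e² = -∫ G E ≤ ‖G‖ ‖E‖`, and `‖G‖ ≤ ((b - a) / π) ‖e‖` by the
Dirichlet case. -/
theorem wirtinger {a b : ℝ} (hab : a < b) {e E : ℝ → ℝ}
    (he : ∀ x ∈ Set.Icc a b, HasDerivWithinAt e (E x) (Set.Icc a b) x)
    (hE : ContinuousOn E (Set.Icc a b)) (h0 : ∫ x in a..b, e x = 0) :
    ∫ x in a..b, (e x) ^ 2 ≤ ((b - a) / Real.pi) ^ 2 * ∫ x in a..b, (E x) ^ 2 := by
  have hec : ContinuousOn e (Set.Icc a b) := fun x hx => (he x hx).continuousWithinAt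
  set G : ℝ → ℝ := fun x => ∫ t in a..x, e t with hGdef
  have hG : ∀ x ∈ Set.Icc a b, HasDerivWithinAt G (e x) (Set.Icc a b) x := by
    intro x hx
    have : Fact (x ∈ Set.Icc a b) := ⟨hx⟩
    refine intervalIntegral.integral_hasDerivWithinAt_right ?_ ?_ (hec x hx)
    · exact (hec.mono (Set.Icc_subset_Icc_right hx.2)).intervalIntegrable_of_Icc hx.1
    · exact hec.stronglyMeasurableAtFilter_nhdsWithin measurableSet_Icc x
  have hGa : G a = 0 := by simp [hGdef]
  have hGb : G b = 0 := h0
  have hGc : ContinuousOn G (Set.Icc a b) := fun x hx => (hG x hx).continuousWithinAt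
  have hD := dirichlet_poincare hab hG hec hGa hGb
  have h1 := ftc_Icc hab.le (F := fun x => G x * e x) (F' := fun x => e x * e x + G x * E x)
    (fun x hx => (hG x hx).mul (he x hx)) (by fun_prop)
  simp only [hGa, hGb] at h1
  set c := (b - a) / Real.pi with hc
  have hcpos : 0 < c := div_pos (sub_pos.2 hab) Real.pi_pos
  -- Young's inequality with the weight that balances the two sides of the Dirichlet case
  have h2 : 0 ≤ ∫ x in a..b, (G x + c ^ 2 * E x) ^ 2 :=
    intervalIntegral.integral_nonneg hab.le fun x _ => sq_nonneg _
  have h3 : ∫ x in a..b, (G x + c ^ 2 * E x) ^ 2 = ∫ x in a..b,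
      (1 * ((G x) ^ 2 + 2 * c ^ 2 * (e x * e x + G x * E x)) + (c ^ 4) * (E x) ^ 2 +
        (-2 * c ^ 2) * (e x) ^ 2) := by
    congr 1; ext x; ring
  have h4 : ∫ x in a..b, ((G x) ^ 2 + 2 * c ^ 2 * (e x * e x + G x * E x)) =
      ∫ x in a..b, (1 * (G x) ^ 2 + 2 * c ^ 2 * (e x * e x + G x * E x) + 0 * (G x) ^ 2) := by
    congr 1; ext x; ring
  rw [integral_lin3 hab.le _ _ _ (by fun_prop) (by fun_prop) (by fun_prop), h1] at h4
  rw [integral_lin3 hab.le _ _ _ (by fun_prop) (by fun_prop) (by fun_prop), h4] at h3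
  have h5 : 0 ≤ c ^ 2 * (c ^ 2 * (∫ x in a..b, (E x) ^ 2) - ∫ x in a..b, (e x) ^ 2) := by
    nlinarith
  have := nonneg_of_mul_nonneg_right h5 (by positivity)
  linarith

/-- Estimate of the flux `ε e' - e + c` on one cell, obtained from Poincaré–Wirtinger; the
boundary term telescopes when summed over the cells. -/
theorem cell_flux_bound {a b : ℝ} (hab : a < b) {e E : ℝ → ℝ} (ε c : ℝ)
    (he : ∀ x ∈ Set.Icc a b, HasDerivWithinAt e (E x) (Set.Icc a b) x)
    (hE : ContinuousOn E (Set.Icc a b)) :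
    ∫ x in a..b, (ε * E x - e x + c) ^ 2 ≤
      (ε ^ 2 + (b - a) ^ 2 / Real.pi ^ 2) * (∫ x in a..b, (E x) ^ 2) +
        (b - a) * ((∫ x in a..b, e x) / (b - a) - c) ^ 2 -
        ε * ((e b - c) ^ 2 - (e a - c) ^ 2) := by
  have hba : 0 < b - a := sub_pos.2 hab
  have hec : ContinuousOn e (Set.Icc a b) := fun x hx => (he x hx).continuousWithinAt
  set A := (∫ x in a..b, e x) / (b - a) with hA
  have hAe : ∫ x in a..b, e x = A * (b - a) := by rw [hA]; field_simp
  have h0 : ∫ x in a..b, (e x - A) = 0 := by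
    have : ∫ x in a..b, (e x - A) = ∫ x in a..b, (1 * e x + (-A) * 1 + 0 * 1) := by
      congr 1; ext x; ring
    rw [this, integral_lin3 hab.le _ _ _ hec continuousOn_const continuousOn_const, hAe]
    simp
  have hW := wirtinger hab (e := fun x => e x - A) (fun x hx => (he x hx).sub_const A) hE h0
  have h1 := ftc_Icc hab.le (F := fun x => (e x - c) ^ 2) (F' := fun x => 2 * (e x - c) * E x)
    (fun x hx => by
      refine (((he x hx).sub_const c).pow 2).congr_deriv ?_
      simp) (by fun_prop)
  have h2 : ∫ x in a..b, (ε * E x - e x + c) ^ 2 = ∫ x in a..b,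
      (ε ^ 2 * (E x) ^ 2 + (-ε) * (2 * (e x - c) * E x) + 1 * (e x - c) ^ 2) := by
    congr 1; ext x; ring
  rw [integral_lin3 hab.le _ _ _ (by fun_prop) (by fun_prop) (by fun_prop), h1] at h2
  have h3 : ∫ x in a..b, (e x - c) ^ 2 = ∫ x in a..b,
      (1 * (e x - A) ^ 2 + (2 * (A - c)) * (e x - A) + (A - c) ^ 2 * 1) := by
    congr 1; ext x; ring
  rw [integral_lin3 hab.le _ _ _ (by fun_prop) (by fun_prop) (by fun_prop), h0] at h3
  simp only [intervalIntegral.integral_const, smul_eq_mul] at h3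
  rw [h2, h3]
  rw [div_pow] at hW
  linarith

theorem cell_young {a b : ℝ} (hab : a ≤ b) {X W : ℝ → ℝ} (ρ : ℝ)
    (hX : ContinuousOn X (Set.Icc a b)) (hW : ContinuousOn W (Set.Icc a b)) :
    2 * ρ * (∫ x in a..b, X x * W x) ≤
      (∫ x in a..b, (X x) ^ 2) + ρ ^ 2 * ∫ x in a..b, (W x) ^ 2 := by
  have h2 : 0 ≤ ∫ x in a..b, (X x - ρ * W x) ^ 2 :=
    intervalIntegral.integral_nonneg hab fun x _ => sq_nonneg _
  have h3 : ∫ x in a..b, (X x - ρ * W x) ^ 2 = ∫ x in a..b,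
      (1 * (X x) ^ 2 + (-2 * ρ) * (X x * W x) + ρ ^ 2 * (W x) ^ 2) := by
    congr 1; ext x; ring
  rw [integral_lin3 hab _ _ _ (by fun_prop) (by fun_prop) (by fun_prop)] at h3
  linarith

/-- The residual of a cellwise affine function with slope `s`, integrated by parts on one cell;
`e = u - p` is the error. -/
theorem cell_residual {a b : ℝ} (hab : a ≤ b) {f u' u'' e V V' : ℝ → ℝ} (ε s : ℝ)
    (hu' : ∀ x ∈ Set.Icc a b, HasDerivWithinAt u' (u'' x) (Set.Icc a b) x)
    (hu'' : ContinuousOn u'' (Set.Icc a b))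
    (he : ∀ x ∈ Set.Icc a b, HasDerivWithinAt e (u' x - s) (Set.Icc a b) x)
    (hV : ∀ x ∈ Set.Icc a b, HasDerivWithinAt V (V' x) (Set.Icc a b) x)
    (hV' : ContinuousOn V' (Set.Icc a b))
    (hode : ∀ x ∈ Set.Icc a b, -ε * u'' x + u' x = f x) :
    (∫ x in a..b, f x * V x) - ε * (∫ x in a..b, s * V' x) - (∫ x in a..b, s * V x) =
      ((-ε * u' b + e b) * V b - (-ε * u' a + e a) * V a) +
        ∫ x in a..b, (ε * (u' x - s) - e x) * V' x := by
  have huc : ContinuousOn u' (Set.Icc a b) := fun x hx => (hu' x hx).continuousWithinAt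
  have hec : ContinuousOn e (Set.Icc a b) := fun x hx => (he x hx).continuousWithinAt
  have hVc : ContinuousOn V (Set.Icc a b) := fun x hx => (hV x hx).continuousWithinAt
  have hfc : ContinuousOn f (Set.Icc a b) :=
    ContinuousOn.congr (f := fun x => -ε * u'' x + u' x) (by fun_prop)
      (fun x hx => (hode x hx).symm)
  have h1 := ftc_Icc hab (F := fun x => (-ε * u' x + e x) * V x)
    (F' := fun x => (-ε * u'' x + (u' x - s)) * V x + (-ε * u' x + e x) * V' x)
    (fun x hx => (((hu' x hx).const_mul (-ε)).add (he x hx)).mul (hV x hx)) (by fun_prop)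
  rw [← h1]
  have h2 := integral_lin3 hab (f := fun x => f x * V x) (g := fun x => s * V' x)
    (k := fun x => s * V x) 1 (-ε) (-1) (by fun_prop) (by fun_prop) (by fun_prop)
  have h3 := integral_lin3 hab
    (f := fun x => (-ε * u'' x + (u' x - s)) * V x + (-ε * u' x + e x) * V' x)
    (g := fun x => (ε * (u' x - s) - e x) * V' x)
    (k := fun _ => (0 : ℝ)) 1 1 0 (by fun_prop) (by fun_prop) (by fun_prop)
  have h4 : ∫ x in a..b, (1 * (f x * V x) + -ε * (s * V' x) + -1 * (s * V x)) =
      ∫ x in a..b, (1 * ((-ε * u'' x + (u' x - s)) * V x + (-ε * u' x + e x) * V' x) +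
        1 * ((ε * (u' x - s) - e x) * V' x) + 0 * 0) := by
    refine intervalIntegral.integral_congr fun x hx => ?_
    rw [Set.uIcc_of_le hab] at hx
    rw [← hode x hx]; ring
  rw [h2, h3] at h4
  linarith

/-- Testing an affine `m` against `1 + H b'` with a bubble `b`: the diffusion `ε` is raised by the
mean of the bubble. -/
theorem cell_affine {a b : ℝ} (hab : a ≤ b) {m Bt β : ℝ → ℝ} (ε μ H : ℝ)
    (hm : ∀ x ∈ Set.Icc a b, HasDerivWithinAt m μ (Set.Icc a b) x)
    (hBt : ∀ x ∈ Set.Icc a b, HasDerivWithinAt Bt (β x) (Set.Icc a b) x)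
    (hβ : ContinuousOn β (Set.Icc a b)) (ha : Bt a = 0) (hb : Bt b = 0) :
    ∫ x in a..b, (ε * μ - m x) * (1 + H * β x) =
      ε * μ * (b - a) - (∫ x in a..b, m x) + H * μ * ∫ x in a..b, Bt x := by
  have hmc : ContinuousOn m (Set.Icc a b) := fun x hx => (hm x hx).continuousWithinAt
  have hBc : ContinuousOn Bt (Set.Icc a b) := fun x hx => (hBt x hx).continuousWithinAt
  have h1 := ftc_Icc hab (F := fun x => (ε * μ - m x) * Bt x)
    (F' := fun x => -μ * Bt x + (ε * μ - m x) * β x)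
    (fun x hx => ((hm x hx).const_sub (ε * μ)).mul (hBt x hx)) (by fun_prop)
  simp only [ha, hb] at h1
  have h2 := integral_lin3 hab
    (f := fun x => -μ * Bt x + (ε * μ - m x) * β x)
    (g := fun x => Bt x) (k := fun x => ε * μ - m x) H (H * μ) 1
    (by fun_prop) (by fun_prop) (by fun_prop)
  have h3 := integral_lin3 hab (f := fun x => m x)
    (g := fun _ => (1 : ℝ)) (k := fun _ => (1 : ℝ)) (-1) (ε * μ) 0
    (by fun_prop) (by fun_prop) (by fun_prop)
  have h4 : ∫ x in a..b, (ε * μ - m x) * (1 + H * β x) = ∫ x in a..b,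
      (H * (-μ * Bt x + (ε * μ - m x) * β x) + H * μ * Bt x + 1 * (ε * μ - m x)) := by
    congr 1; ext x; ring
  have h5 : ∫ x in a..b, (ε * μ - m x) = ∫ x in a..b, (-1 * m x + ε * μ * 1 + 0 * 1) := by
    congr 1; ext x; ring
  rw [h4, h2, h1, h5, h3]
  simp; ring

theorem cell_bubble_sq {a b : ℝ} (hab : a ≤ b) {Bt β : ℝ → ℝ} (H : ℝ)
    (hBt : ∀ x ∈ Set.Icc a b, HasDerivWithinAt Bt (β x) (Set.Icc a b) x)
    (hβ : ContinuousOn β (Set.Icc a b)) (ha : Bt a = 0) (hb : Bt b = 0) :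
    ∫ x in a..b, (1 + H * β x) ^ 2 = (b - a) + H ^ 2 * ∫ x in a..b, (β x) ^ 2 := by
  have h1 := ftc_Icc hab hBt hβ
  have h2 := integral_lin3 hab (f := fun _ => (1 : ℝ)) (g := β) (k := fun x => (β x) ^ 2)
    1 (2 * H) (H ^ 2) (by fun_prop) (by fun_prop) (by fun_prop)
  have h4 : ∫ x in a..b, (1 + H * β x) ^ 2 = ∫ x in a..b,
      (1 * 1 + 2 * H * β x + H ^ 2 * (β x) ^ 2) := by
    congr 1; ext x; ring
  rw [h4, h2, h1, ha, hb]
  simp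

/-! ### The space of piecewise linear functions -/

/-- The slope of `v` on the cell `[i/n, (i+1)/n]`. -/
noncomputable def cellSlope (n : ℕ) (v : ℝ → ℝ) (i : ℕ) : ℝ :=
  n * (v (((i : ℝ) + 1) / n) - v ((i : ℝ) / n))

theorem node_lt {n : ℕ} (hn : 0 < n) (i : ℕ) : (i : ℝ) / n < ((i : ℝ) + 1) / n := by
  have : (0 : ℝ) < n := by exact_mod_cast hn
  gcongr; linarith

theorem cell_subset {n i : ℕ} (hi : i < n) :
    Set.Icc ((i : ℝ) / n) (((i : ℝ) + 1) / n) ⊆ Set.Icc 0 1 := by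
  have : (0 : ℝ) < n := by exact_mod_cast (by omega : 0 < n)
  have h1 : (i : ℝ) + 1 ≤ n := by exact_mod_cast hi
  refine Set.Icc_subset_Icc (by positivity) ?_
  rwa [div_le_one this]

theorem integral_eq_sum_cells {n : ℕ} (hn : 0 < n) {f : ℝ → ℝ} (g : ℕ → ℝ → ℝ)
    (hg : ∀ i < n, ContinuousOn (g i) (Set.Icc ((i : ℝ) / n) (((i : ℝ) + 1) / n)))
    (hfg : ∀ i < n, ∀ x ∈ Set.Ioo ((i : ℝ) / n) (((i : ℝ) + 1) / n), f x = g i x) :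
    ∫ x in (0:ℝ)..1, f x =
      ∑ i ∈ Finset.range n, ∫ x in ((i : ℝ) / n)..(((i : ℝ) + 1) / n), g i x := by
  have hn' : (n : ℝ) ≠ 0 := by exact_mod_cast hn.ne'
  have h := intervalIntegral.sum_integral_adjacent_intervals (μ := MeasureTheory.volume) (f := f)
    (a := fun i : ℕ => (i : ℝ) / n) (n := n) (fun i hi => by
      push_cast
      refine (((hg i hi).intervalIntegrable_of_Icc (node_lt hn i).le)).congr_uIoo ?_
      rw [Set.uIoo_of_le (node_lt hn i).le]
      exact fun x hx => (hfg i hi x hx).symm)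
  simp only [Nat.cast_zero, zero_div, div_self hn', Nat.cast_add, Nat.cast_one] at h
  rw [← h]
  refine Finset.sum_congr rfl fun i hi => ?_
  exact intervalIntegral.integral_congr_Ioo_of_le (node_lt hn i).le
    (hfg i (Finset.mem_range.1 hi))

theorem sum_nodes {n : ℕ} (hn : 0 < n) (F : ℝ → ℝ) :
    ∑ i ∈ Finset.range n, (F (((i : ℝ) + 1) / n) - F ((i : ℝ) / n)) = F 1 - F 0 := by
  have hn' : (n : ℝ) ≠ 0 := by exact_mod_cast hn.ne'
  have := Finset.sum_range_sub (fun i : ℕ => F ((i : ℝ) / n)) n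
  simpa [div_self hn'] using this

theorem InMh.eq_on_cell {n : ℕ} {v : ℝ → ℝ} (hv : InMh n v) {i : ℕ} (hi : i < n) {x : ℝ}
    (hx : x ∈ Set.Icc ((i : ℝ) / n) (((i : ℝ) + 1) / n)) :
    v x = v ((i : ℝ) / n) + cellSlope n v i * (x - (i : ℝ) / n) := by
  have hn : 0 < n := by omega
  have hn' : (n : ℝ) ≠ 0 := by exact_mod_cast hn.ne'
  obtain ⟨a, c, h⟩ := hv.2.2.2 (i + 1) (by omega) (by omega)
  have e1 : (((i + 1 : ℕ) : ℝ) - 1) / n = (i : ℝ) / n := by push_cast; ring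
  have e2 : (((i + 1 : ℕ) : ℝ)) / n = ((i : ℝ) + 1) / n := by push_cast; ring
  rw [e1, e2] at h
  rw [cellSlope, h x hx, h _ (Set.left_mem_Icc.2 (node_lt hn i).le),
    h _ (Set.right_mem_Icc.2 (node_lt hn i).le)]
  field_simp
  ring

theorem InMh.hasDerivWithinAt {n : ℕ} {v : ℝ → ℝ} (hv : InMh n v) {i : ℕ} (hi : i < n) :
    ∀ x ∈ Set.Icc ((i : ℝ) / n) (((i : ℝ) + 1) / n),
      HasDerivWithinAt v (cellSlope n v i) (Set.Icc ((i : ℝ) / n) (((i : ℝ) + 1) / n)) x := by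
  intro x hx
  have h : HasDerivAt (fun x : ℝ => v ((i : ℝ) / n) + cellSlope n v i * (x - (i : ℝ) / n))
      (cellSlope n v i * 1) x :=
    (((hasDerivAt_id x).sub_const _).const_mul _).const_add _
  rw [mul_one] at h
  exact h.hasDerivWithinAt.congr (fun y hy => hv.eq_on_cell hi hy) (hv.eq_on_cell hi hx)

theorem deriv_eq_of_within {a b : ℝ} {v v' : ℝ → ℝ}
    (hv : ∀ x ∈ Set.Icc a b, HasDerivWithinAt v (v' x) (Set.Icc a b) x) :
    ∀ x ∈ Set.Ioo a b, deriv v x = v' x := fun x hx =>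
  ((hv x (Set.Ioo_subset_Icc_self hx)).hasDerivAt (Icc_mem_nhds hx.1 hx.2)).deriv

theorem InMh.lin {n : ℕ} {v w : ℝ → ℝ} (hv : InMh n v) (hw : InMh n w) (s t : ℝ) :
    InMh n (fun x => s * v x + t * w x) := by
  refine ⟨(hv.1.const_mul s).add (hw.1.const_mul t), by simp [hv.2.1, hw.2.1],
    by simp [hv.2.2.1, hw.2.2.1], fun i h1 h2 => ?_⟩
  obtain ⟨a, c, h⟩ := hv.2.2.2 i h1 h2
  obtain ⟨a', c', h'⟩ := hw.2.2.2 i h1 h2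
  refine ⟨s * a + t * a', s * c + t * c', fun x hx => ?_⟩
  simp only [h x hx, h' x hx]
  ring

/-- Slopes of a function in `M_h` can be prescribed freely, subject to mean zero. -/
theorem exists_InMh_slope {n : ℕ} (hn : 0 < n) (r : ℕ → ℝ)
    (hr : ∑ i ∈ Finset.range n, r i = 0) :
    ∃ w, InMh n w ∧ ∀ i < n, cellSlope n w i = r i := by
  have hn' : (0 : ℝ) < n := by exact_mod_cast hn
  set w : ℝ → ℝ := fun x => ∑ j ∈ Finset.range n, r j * max 0 (min (x - (j : ℝ) / n) (1 / n))
    with hw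
  have key : ∀ i < n, ∀ x ∈ Set.Icc ((i : ℝ) / n) (((i : ℝ) + 1) / n),
      w x = (∑ j ∈ Finset.range i, r j) / n + r i * (x - (i : ℝ) / n) := by
    intro i hi x hx
    have hsub : Finset.range (i + 1) ⊆ Finset.range n := Finset.range_subset_range.2 hi
    rw [hw]
    simp only
    rw [← Finset.sum_subset hsub, Finset.sum_range_succ, Finset.sum_div]
    · congr 1
      · refine Finset.sum_congr rfl fun j hj => ?_
        have hj' : (j : ℝ) + 1 ≤ i := by exact_mod_cast Finset.mem_range.1 hj
        have : (j : ℝ) / n + 1 / n ≤ x := by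
          rw [← add_div]; exact le_trans (by gcongr) hx.1
        rw [min_eq_right (by linarith), max_eq_right (by positivity)]
        ring
      · have : x - (i : ℝ) / n ≤ 1 / n := by
          have := hx.2; rw [add_div] at this; linarith
        rw [min_eq_left this, max_eq_right (by linarith [hx.1])]
    · intro j _ hj
      have hj' : (i : ℝ) + 1 ≤ j := by
        have : i + 1 ≤ j := by simpa using hj
        exact_mod_cast this
      have : x ≤ (j : ℝ) / n := hx.2.trans (by gcongr)
      rw [max_eq_left ((min_le_left _ _).trans (by linarith)), mul_zero]
  refine ⟨w, ⟨?_, ?_, ?_, ?_⟩, ?_⟩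
  · exact Continuous.continuousOn (by fun_prop)
  · rw [key 0 hn 0 (by simp)]
    simp
  · obtain ⟨k, rfl⟩ : ∃ k, n = k + 1 := ⟨n - 1, by omega⟩
    have h1 : ((k : ℝ) + 1) / ((k + 1 : ℕ) : ℝ) = 1 := by
      push_cast; exact div_self (by positivity)
    rw [key k (by omega) 1 ⟨by push_cast; rw [div_le_one (by positivity)]; linarith, h1.ge⟩]
    rw [Finset.sum_range_succ] at hr
    have h2 : 1 - (k : ℝ) / ((k + 1 : ℕ) : ℝ) = 1 / ((k + 1 : ℕ) : ℝ) := by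
      push_cast; field_simp; ring
    rw [h2, mul_one_div, ← add_div, hr, zero_div]
  · intro i h1 h2
    obtain ⟨k, rfl⟩ : ∃ k, i = k + 1 := ⟨i - 1, by omega⟩
    refine ⟨r k, (∑ j ∈ Finset.range k, r j) / n - r k * ((k : ℝ) / n), fun x hx => ?_⟩
    rw [key k (by omega) x (by push_cast at hx; simpa using hx)]
    ring
  · intro i hi
    rw [cellSlope, key i hi _ (Set.left_mem_Icc.2 (node_lt hn i).le),
      key i hi _ (Set.right_mem_Icc.2 (node_lt hn i).le)]
    field_simp
    ring

theorem bubbleMod_on_cell {n : ℕ} {B : ℝ → ℝ} (hB0 : B 0 = 0) (hBh : B (1 / n) = 0)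
    (w : ℝ → ℝ) {i : ℕ} (hi : i < n) {x : ℝ}
    (hx : x ∈ Set.Icc ((i : ℝ) / n) (((i : ℝ) + 1) / n)) :
    bubbleMod n B w x = w x + cellSlope n w i * (1 / n * B (x - (i : ℝ) / n)) := by
  have hn : 0 < n := by omega
  have hn' : (0 : ℝ) < n := by exact_mod_cast hn
  have e1 : (((i + 1 : ℕ) : ℝ) - 1) / n = (i : ℝ) / n := by push_cast; ring
  have e2 : (((i + 1 : ℕ) : ℝ)) / n = ((i : ℝ) + 1) / n := by push_cast; ring
  rw [bubbleMod, Finset.sum_eq_single (i + 1)]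
  · rw [bubbleI, e1, e2, if_pos hx, cellSlope]
    field_simp
  · intro j hj hne
    -- a foreign cell meets this one at most in a common node, where the bubble vanishes
    suffices h : bubbleI n B j x = 0 by rw [h, mul_zero]
    rw [bubbleI]
    split_ifs with hxj
    · rcases Nat.lt_or_ge j (i + 1) with h | h
      · have hji : (j : ℝ) / n ≤ (i : ℝ) / n := by
          gcongr; omega
        have : x = (j : ℝ) / n := le_antisymm hxj.2 (hji.trans hx.1)
        rw [this, ← sub_div, sub_sub_cancel, hBh]
      · have h' : (i : ℝ) + 1 ≤ (j : ℝ) - 1 := by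
          have : i + 2 ≤ j := by omega
          have : (i : ℝ) + 2 ≤ j := by exact_mod_cast this
          linarith
        have hji : ((i : ℝ) + 1) / n ≤ ((j : ℝ) - 1) / n := by gcongr
        have : x = ((j : ℝ) - 1) / n := le_antisymm (hx.2.trans hji) hxj.1
        rw [this, sub_self, hB0]
    · rfl
  · intro h
    exact absurd (Finset.mem_Icc.2 ⟨by omega, by omega⟩) h

/-! ### The Petrov–Galerkin error -/

theorem bubble_cell {n : ℕ} {B B' : ℝ → ℝ}
    (hB : ∀ x ∈ Set.Icc (0:ℝ) (1 / n), HasDerivWithinAt B (B' x) (Set.Icc 0 (1 / n)) x)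
    (hB' : ContinuousOn B' (Set.Icc 0 (1 / n))) (i : ℕ) :
    (∀ x ∈ Set.Icc ((i : ℝ) / n) (((i : ℝ) + 1) / n),
      HasDerivWithinAt (fun x => B (x - (i : ℝ) / n)) (B' (x - (i : ℝ) / n))
        (Set.Icc ((i : ℝ) / n) (((i : ℝ) + 1) / n)) x) ∧
    ContinuousOn (fun x => B' (x - (i : ℝ) / n))
      (Set.Icc ((i : ℝ) / n) (((i : ℝ) + 1) / n)) := by
  have hmaps : Set.MapsTo (fun x : ℝ => x - (i : ℝ) / n)
      (Set.Icc ((i : ℝ) / n) (((i : ℝ) + 1) / n)) (Set.Icc 0 (1 / n)) := by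
    intro x hx
    have := hx.2
    rw [add_div] at this
    exact ⟨by linarith [hx.1], by linarith⟩
  refine ⟨fun x hx => ?_, hB'.comp (by fun_prop) hmaps⟩
  have h := (hB _ (hmaps hx)).comp x ((hasDerivWithinAt_id x _).sub_const ((i : ℝ) / n)) hmaps
  rw [mul_one] at h
  exact h

theorem integral_shift_cell {n : ℕ} (g : ℝ → ℝ) (i : ℕ) :
    ∫ x in ((i : ℝ) / n)..(((i : ℝ) + 1) / n), g (x - (i : ℝ) / n) =
      ∫ x in (0:ℝ)..(1 / n), g x := by
  rw [intervalIntegral.integral_comp_sub_right, sub_self, ← sub_div, add_sub_cancel_left]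

/-- Galerkin orthogonality `b(u - u_h, v) = 0` for `v = bubbleMod n B w`, integrated by parts on
each cell; there `v' = w' (1 + h B')`. -/
theorem galerkin_orthogonality {n : ℕ} (hn : 0 < n) {B B' : ℝ → ℝ}
    (hB : ∀ x ∈ Set.Icc (0:ℝ) (1 / n), HasDerivWithinAt B (B' x) (Set.Icc 0 (1 / n)) x)
    (hB' : ContinuousOn B' (Set.Icc 0 (1 / n)))
    (hB0 : B 0 = 0) (hBh : B (1 / n) = 0) {ε : ℝ} {f u u' u'' : ℝ → ℝ}
    (hu : ∀ x ∈ Set.Icc (0:ℝ) 1, HasDerivWithinAt u (u' x) (Set.Icc 0 1) x)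
    (hu' : ∀ x ∈ Set.Icc (0:ℝ) 1, HasDerivWithinAt u' (u'' x) (Set.Icc 0 1) x)
    (hu'' : ContinuousOn u'' (Set.Icc 0 1))
    (hode : ∀ x ∈ Set.Icc (0:ℝ) 1, -ε * u'' x + u' x = f x)
    {uh : ℝ → ℝ} (huh : InMh n uh) {w : ℝ → ℝ} (hw : InMh n w)
    (hupg : ε * (∫ x in (0:ℝ)..1, deriv uh x * deriv (bubbleMod n B w) x) +
        (∫ x in (0:ℝ)..1, deriv uh x * bubbleMod n B w x) =
          ∫ x in (0:ℝ)..1, f x * bubbleMod n B w x) :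
    ∑ i ∈ Finset.range n, cellSlope n w i * ∫ x in ((i : ℝ) / n)..(((i : ℝ) + 1) / n),
      (ε * (u' x - cellSlope n uh i) - (u x - uh x)) * (1 + 1 / n * B' (x - (i : ℝ) / n)) = 0 := by
  have huc : ContinuousOn u' (Set.Icc 0 1) := fun x hx => (hu' x hx).continuousWithinAt
  have hfc : ContinuousOn f (Set.Icc 0 1) :=
    ContinuousOn.congr (f := fun x => -ε * u'' x + u' x) (by fun_prop)
      (fun x hx => (hode x hx).symm)
  set V : ℕ → ℝ → ℝ := fun i x => w x + cellSlope n w i * (1 / n * B (x - (i : ℝ) / n)) with hV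
  set V' : ℕ → ℝ → ℝ := fun i x => cellSlope n w i * (1 + 1 / n * B' (x - (i : ℝ) / n)) with hV'
  have hVeq : ∀ i < n, ∀ x ∈ Set.Icc ((i : ℝ) / n) (((i : ℝ) + 1) / n),
      bubbleMod n B w x = V i x := fun i hi x hx => bubbleMod_on_cell hB0 hBh w hi hx
  have hVd : ∀ i < n, ∀ x ∈ Set.Icc ((i : ℝ) / n) (((i : ℝ) + 1) / n),
      HasDerivWithinAt (V i) (V' i x) (Set.Icc ((i : ℝ) / n) (((i : ℝ) + 1) / n)) x := by
    intro i hi x hx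
    have h := (hw.hasDerivWithinAt hi x hx).add
      ((((bubble_cell hB hB' i).1 x hx).const_mul (1 / (n : ℝ))).const_mul (cellSlope n w i))
    refine h.congr_deriv ?_
    rw [hV']; ring
  have hVc : ∀ i < n, ContinuousOn (V i) (Set.Icc ((i : ℝ) / n) (((i : ℝ) + 1) / n)) :=
    fun i hi x hx => (hVd i hi x hx).continuousWithinAt
  have hV'c : ∀ i < n, ContinuousOn (V' i) (Set.Icc ((i : ℝ) / n) (((i : ℝ) + 1) / n)) := by
    intro i hi
    exact continuousOn_const.mul (continuousOn_const.add
      (continuousOn_const.mul (bubble_cell hB hB' i).2))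
  have hd : ∀ i < n, ∀ x ∈ Set.Ioo ((i : ℝ) / n) (((i : ℝ) + 1) / n),
      deriv uh x = cellSlope n uh i := fun i hi =>
    deriv_eq_of_within (v' := fun _ => cellSlope n uh i) (huh.hasDerivWithinAt hi)
  have hdV : ∀ i < n, ∀ x ∈ Set.Ioo ((i : ℝ) / n) (((i : ℝ) + 1) / n),
      deriv (bubbleMod n B w) x = V' i x := fun i hi =>
    deriv_eq_of_within fun x hx => (hVd i hi x hx).congr (hVeq i hi) (hVeq i hi x hx)
  rw [integral_eq_sum_cells hn (fun i x => cellSlope n uh i * V' i x)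
      (fun i hi => (hV'c i hi).const_mul _)
      (fun i hi x hx => by rw [hd i hi x hx, hdV i hi x hx]),
    integral_eq_sum_cells hn (fun i x => cellSlope n uh i * V i x)
      (fun i hi => (hVc i hi).const_mul _)
      (fun i hi x hx => by rw [hd i hi x hx, hVeq i hi x (Set.Ioo_subset_Icc_self hx)]),
    integral_eq_sum_cells hn (fun i x => f x * V i x)
      (fun i hi => (hfc.mono (cell_subset hi)).mul (hVc i hi))
      (fun i hi x hx => by rw [hVeq i hi x (Set.Ioo_subset_Icc_self hx)]),
    Finset.mul_sum, ← Finset.sum_add_distrib, eq_comm, ← sub_eq_zero,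
    ← Finset.sum_sub_distrib] at hupg
  have htel := sum_nodes hn (fun x => (-ε * u' x + (u x - uh x)) * w x)
  simp only [hw.2.1, hw.2.2.1] at htel
  have hcells : ∀ i ∈ Finset.range n,
      (∫ x in ((i : ℝ) / n)..(((i : ℝ) + 1) / n), f x * V i x) -
        (ε * (∫ x in ((i : ℝ) / n)..(((i : ℝ) + 1) / n), cellSlope n uh i * V' i x) +
          ∫ x in ((i : ℝ) / n)..(((i : ℝ) + 1) / n), cellSlope n uh i * V i x) =
      ((-ε * u' (((i : ℝ) + 1) / n) + (u (((i : ℝ) + 1) / n) - uh (((i : ℝ) + 1) / n))) *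
          w (((i : ℝ) + 1) / n) -
        (-ε * u' ((i : ℝ) / n) + (u ((i : ℝ) / n) - uh ((i : ℝ) / n))) * w ((i : ℝ) / n)) +
      cellSlope n w i * ∫ x in ((i : ℝ) / n)..(((i : ℝ) + 1) / n),
        (ε * (u' x - cellSlope n uh i) - (u x - uh x)) *
          (1 + 1 / n * B' (x - (i : ℝ) / n)) := by
    intro i hi
    rw [Finset.mem_range] at hi
    have hsub := cell_subset hi
    have h := cell_residual (node_lt hn i).le (f := f) (u' := u') (u'' := u'')
      (e := fun x => u x - uh x) (V := V i) (V' := V' i) ε (cellSlope n uh i)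
      (fun x hx => (hu' x (hsub hx)).mono hsub) (hu''.mono hsub)
      (fun x hx => ((hu x (hsub hx)).mono hsub).sub (huh.hasDerivWithinAt hi x hx))
      (hVd i hi) (hV'c i hi) (fun x hx => hode x (hsub hx))
    have hl : V i ((i : ℝ) / n) = w ((i : ℝ) / n) := by simp [hV, hB0]
    have hr : V i (((i : ℝ) + 1) / n) = w (((i : ℝ) + 1) / n) := by
      simp only [hV]
      rw [← sub_div, add_sub_cancel_left, hBh]; ring
    rw [hl, hr] at h
    rw [← sub_sub, h, ← intervalIntegral.integral_const_mul]
    congr 2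
    ext x
    simp only [hV']
    ring
  rw [Finset.sum_congr rfl hcells, Finset.sum_add_distrib, htel] at hupg
  simpa using hupg

theorem sigmaSq_eq {n : ℕ} (hn : 0 < n) {v : ℝ → ℝ} (hv : ContinuousOn v (Set.Icc 0 1))
    {A : ℕ → ℝ} (hA : ∀ i, A i = ∫ x in ((i : ℝ) / n)..(((i : ℝ) + 1) / n), v x) :
    sigmaSq n v =
      (1 / n) * ∑ i ∈ Finset.range n, (n * A i) ^ 2 - (∑ i ∈ Finset.range n, A i) ^ 2 := by
  rw [sigmaSq, integral_eq_sum_cells hn (fun _ => v) (fun i hi => hv.mono (cell_subset hi))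
    (fun _ _ _ _ => rfl)]
  simp only [hA]

/-- `σ²` as the variance of the cell means. -/
theorem variance_eq {n : ℕ} (hn : 0 < n) (A : ℕ → ℝ) :
    (1 / n) * ∑ i ∈ Finset.range n, (n * A i) ^ 2 - (∑ i ∈ Finset.range n, A i) ^ 2 =
      (1 / (n : ℝ)) * ∑ i ∈ Finset.range n, (n * A i - ∑ j ∈ Finset.range n, A j) ^ 2 := by
  have hn' : (n : ℝ) ≠ 0 := by exact_mod_cast hn.ne'
  set S := ∑ j ∈ Finset.range n, A j with hS
  have : ∑ i ∈ Finset.range n, (n * A i - S) ^ 2 =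
      ∑ i ∈ Finset.range n, (n * A i) ^ 2 - 2 * n * S * ∑ i ∈ Finset.range n, A i + n * S ^ 2 := by
    simp only [sub_sq, Finset.sum_add_distrib, Finset.sum_sub_distrib, Finset.mul_sum,
      Finset.sum_const, Finset.card_range, nsmul_eq_mul]
    congr 2
    refine Finset.sum_congr rfl fun i _ => ?_
    ring
  rw [this, ← hS]
  field_simp
  ring

/-- Stability of the Petrov–Galerkin projection in the discrete optimal norm:
`‖u_h - p_h‖² ≤ (1 + b₂) ‖u - p_h‖²`. The test function `w` that attains the dual norm of
`m = u_h - p_h` has the slopes `r i = d m' - (mean of m on the cell) + (mean of m)`. -/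
theorem projection_stability {n : ℕ} (hn : 0 < n)
    {B B' : ℝ → ℝ} {b₁ b₂ : ℝ} (hb₂ : 0 < b₂)
    (hB : ∀ x ∈ Set.Icc (0:ℝ) (1 / n), HasDerivWithinAt B (B' x) (Set.Icc 0 (1 / n)) x)
    (hB' : ContinuousOn B' (Set.Icc 0 (1 / n)))
    (hB0 : B 0 = 0) (hBh : B (1 / n) = 0)
    (hBint : ∫ x in (0:ℝ)..(1 / n), B x = b₁ * (1 / n))
    (hB'int : ∫ x in (0:ℝ)..(1 / n), (B' x)^2 = b₂ / (1 / n))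
    {ε : ℝ}
    (hrestr : ε^2 + (1 / (n : ℝ))^2 / Real.pi^2 ≤ (ε + (1 / (n : ℝ)) * b₁)^2)
    {u u' : ℝ → ℝ}
    (hu : ∀ x ∈ Set.Icc (0:ℝ) 1, HasDerivWithinAt u (u' x) (Set.Icc 0 1) x)
    (huc : ContinuousOn u' (Set.Icc 0 1))
    (hu0 : u 0 = 0) (hu1 : u 1 = 0)
    {uh : ℝ → ℝ} (huh : InMh n uh)
    (horth : ∀ w, InMh n w → ∑ i ∈ Finset.range n, cellSlope n w i *
      ∫ x in ((i : ℝ) / n)..(((i : ℝ) + 1) / n),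
        (ε * (u' x - cellSlope n uh i) - (u x - uh x)) *
          (1 + 1 / n * B' (x - (i : ℝ) / n)) = 0)
    {ph : ℝ → ℝ} (hph : InMh n ph) :
    (ε + (1 / (n : ℝ)) * b₁)^2 *
        ((1 / n) * ∑ i ∈ Finset.range n, (cellSlope n uh i - cellSlope n ph i) ^ 2) +
      sigmaSq n (fun x => uh x - ph x) ≤
    (1 + b₂) * ((ε + (1 / (n : ℝ)) * b₁)^2 * (∑ i ∈ Finset.range n,
        ∫ x in ((i : ℝ) / n)..(((i : ℝ) + 1) / n), (u' x - cellSlope n ph i) ^ 2) +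
      sigmaSq n (fun x => u x - ph x)) := by
  have hn' : (0 : ℝ) < n := by exact_mod_cast hn
  have hlen : ∀ i : ℕ, ((i : ℝ) + 1) / n - (i : ℝ) / n = 1 / n := fun i => by
    rw [← sub_div, add_sub_cancel_left]
  have hucont : ContinuousOn u (Set.Icc 0 1) := fun x hx => (hu x hx).continuousWithinAt
  set d := ε + (1 / (n : ℝ)) * b₁ with hd
  set m : ℝ → ℝ := fun x => uh x - ph x with hm
  set e : ℝ → ℝ := fun x => u x - ph x with he
  set μ : ℕ → ℝ := fun i => cellSlope n uh i - cellSlope n ph i with hμ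
  set M : ℕ → ℝ := fun i => ∫ x in ((i : ℝ) / n)..(((i : ℝ) + 1) / n), m x with hM
  set A : ℕ → ℝ := fun i => ∫ x in ((i : ℝ) / n)..(((i : ℝ) + 1) / n), e x with hA
  set Mt := ∑ i ∈ Finset.range n, M i with hMt
  set c := ∑ i ∈ Finset.range n, A i with hc
  set D : ℕ → ℝ := fun i => ∫ x in ((i : ℝ) / n)..(((i : ℝ) + 1) / n),
    (u' x - cellSlope n ph i) ^ 2 with hD
  have hmd : ∀ i < n, ∀ x ∈ Set.Icc ((i : ℝ) / n) (((i : ℝ) + 1) / n),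
      HasDerivWithinAt m (μ i) (Set.Icc ((i : ℝ) / n) (((i : ℝ) + 1) / n)) x :=
    fun i hi x hx => (huh.hasDerivWithinAt hi x hx).sub (hph.hasDerivWithinAt hi x hx)
  have hed : ∀ i < n, ∀ x ∈ Set.Icc ((i : ℝ) / n) (((i : ℝ) + 1) / n),
      HasDerivWithinAt e (u' x - cellSlope n ph i)
        (Set.Icc ((i : ℝ) / n) (((i : ℝ) + 1) / n)) x :=
    fun i hi x hx => ((hu x (cell_subset hi hx)).mono (cell_subset hi)).sub
      (hph.hasDerivWithinAt hi x hx)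
  have hm0 : m 0 = 0 := by simp [hm, huh.2.1, hph.2.1]
  have hm1 : m 1 = 0 := by simp [hm, huh.2.2.1, hph.2.2.1]
  have he0 : e 0 = 0 := by simp [he, hu0, hph.2.1]
  have he1 : e 1 = 0 := by simp [he, hu1, hph.2.2.1]
  have hμ0 : ∑ i ∈ Finset.range n, μ i = 0 := by
    have h := sum_nodes hn m
    rw [hm0, hm1, sub_self] at h
    have : ∑ i ∈ Finset.range n, μ i =
        n * ∑ i ∈ Finset.range n, (m (((i : ℝ) + 1) / n) - m ((i : ℝ) / n)) := by
      rw [Finset.mul_sum]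
      refine Finset.sum_congr rfl fun i _ => ?_
      simp only [hμ, hm, cellSlope]; ring
    rw [this, h, mul_zero]
  have hμM : ∑ i ∈ Finset.range n, μ i * M i = 0 := by
    have h := sum_nodes hn (fun x => m x ^ 2 / 2)
    simp only [hm0, hm1] at h
    rw [sub_self] at h
    rw [← h]
    refine Finset.sum_congr rfl fun i hi => ?_
    have hi' := Finset.mem_range.1 hi
    have hmc : ContinuousOn m (Set.Icc ((i : ℝ) / n) (((i : ℝ) + 1) / n)) :=
      fun x hx => (hmd i hi' x hx).continuousWithinAt
    rw [← ftc_Icc (node_lt hn i).le (F := fun x => m x ^ 2 / 2) (F' := fun x => μ i * m x)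
      (fun x hx => by
        refine (((hmd i hi' x hx).pow 2).div_const 2).congr_deriv ?_
        simp; ring) (by fun_prop), intervalIntegral.integral_const_mul]
  set r : ℕ → ℝ := fun i => d * μ i - (n * M i - Mt) with hr
  have hr0 : ∑ i ∈ Finset.range n, r i = 0 := by
    simp only [hr, Finset.sum_sub_distrib, ← Finset.mul_sum, hμ0, Finset.sum_const,
      Finset.card_range, nsmul_eq_mul]
    rw [← hMt]; ring
  obtain ⟨w, hw, hwr⟩ := exists_InMh_slope hn r hr0
  set R := (1 / (n : ℝ)) * ∑ i ∈ Finset.range n, r i ^ 2 with hR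
  -- by the choice of `r`, the norm of `m` is that of the slopes of `w`
  have hRN : d ^ 2 * ((1 / n) * ∑ i ∈ Finset.range n, μ i ^ 2) + sigmaSq n m = R := by
    rw [sigmaSq_eq hn (v := m) (huh.1.sub hph.1) (A := M) (fun _ => rfl), variance_eq hn, ← hMt, hR]
    have : ∑ i ∈ Finset.range n, r i ^ 2 = d ^ 2 * ∑ i ∈ Finset.range n, μ i ^ 2 -
        2 * d * n * ∑ i ∈ Finset.range n, μ i * M i + 2 * d * Mt * ∑ i ∈ Finset.range n, μ i +
        ∑ i ∈ Finset.range n, (n * M i - Mt) ^ 2 := by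
      simp only [Finset.mul_sum, ← Finset.sum_add_distrib, ← Finset.sum_sub_distrib]
      refine Finset.sum_congr rfl fun i _ => ?_
      simp only [hr]; ring
    rw [this, hμM, hμ0]; ring
  set X : ℕ → ℝ → ℝ := fun i x => ε * (u' x - cellSlope n ph i) - e x + c with hX
  set W : ℕ → ℝ → ℝ := fun i x => 1 + 1 / n * B' (x - (i : ℝ) / n) with hW
  have hWc : ∀ i, ContinuousOn (W i) (Set.Icc ((i : ℝ) / n) (((i : ℝ) + 1) / n)) := by
    intro i
    exact continuousOn_const.add (continuousOn_const.mul (bubble_cell hB hB' i).2)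
  have hBl : ∀ i : ℕ, B ((i : ℝ) / n - (i : ℝ) / n) = 0 := fun i => by rw [sub_self, hB0]
  have hBr : ∀ i : ℕ, B (((i : ℝ) + 1) / n - (i : ℝ) / n) = 0 := fun i => by rw [hlen, hBh]
  have hXc : ∀ i < n, ContinuousOn (X i) (Set.Icc ((i : ℝ) / n) (((i : ℝ) + 1) / n)) := by
    intro i hi
    have h1 := huc.mono (cell_subset hi)
    have h2 : ContinuousOn e (Set.Icc ((i : ℝ) / n) (((i : ℝ) + 1) / n)) :=
      fun x hx => (hed i hi x hx).continuousWithinAt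
    fun_prop
  -- `b(u - p_h, v) = b(u_h - p_h, v)`, and the right-hand side is `R`
  have hXW : ∑ i ∈ Finset.range n, r i *
      (∫ x in ((i : ℝ) / n)..(((i : ℝ) + 1) / n), X i x * W i x) = R := by
    have h1 := horth w hw
    have hcell : ∀ i ∈ Finset.range n, r i *
        (∫ x in ((i : ℝ) / n)..(((i : ℝ) + 1) / n), X i x * W i x) =
        cellSlope n w i * (∫ x in ((i : ℝ) / n)..(((i : ℝ) + 1) / n),
          (ε * (u' x - cellSlope n uh i) - (u x - uh x)) * (1 + 1 / n * B' (x - (i : ℝ) / n))) +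
        (1 / n * r i ^ 2 + (c - Mt) / n * r i) := by
      intro i hi
      rw [Finset.mem_range] at hi
      have hb := bubble_cell hB hB' i
      have hlin := integral_lin3 (node_lt hn i).le
        (f := fun x => (ε * (u' x - cellSlope n uh i) - (u x - uh x)) * W i x)
        (g := fun x => (ε * μ i - m x) * W i x)
        (k := fun x => (ε * 0 - (-1)) * W i x) 1 1 c
        (((((huc.mono (cell_subset hi)).sub continuousOn_const).const_mul _).sub
          ((hucont.sub huh.1).mono (cell_subset hi))).mul (hWc i))
        ((continuousOn_const.sub ((huh.1.sub hph.1).mono (cell_subset hi))).mul (hWc i))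
        (continuousOn_const.mul (hWc i))
      have h2 := cell_affine (node_lt hn i).le ε (μ i) (1 / n) (hmd i hi) hb.1 hb.2
        (hBl i) (hBr i)
      have h3 := cell_affine (node_lt hn i).le (m := fun _ => -1) ε 0 (1 / n)
        (fun x _ => hasDerivWithinAt_const x _ _) hb.1 hb.2 (hBl i) (hBr i)
      rw [integral_shift_cell B, hBint, hlen] at h2 h3
      simp only [intervalIntegral.integral_const, hlen, smul_eq_mul] at h3
      have h4 : ∫ x in ((i : ℝ) / n)..(((i : ℝ) + 1) / n), X i x * W i x =
          ∫ x in ((i : ℝ) / n)..(((i : ℝ) + 1) / n),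
            (1 * ((ε * (u' x - cellSlope n uh i) - (u x - uh x)) * W i x) +
              1 * ((ε * μ i - m x) * W i x) + c * ((ε * 0 - (-1)) * W i x)) := by
        congr 1; ext x; simp only [hX, he, hm, hμ]; ring
      rw [h4, hlin, hwr i hi]
      simp only [hW]
      rw [h2, h3]
      have h5 : ε * μ i * (1 / n) - (∫ x in ((i : ℝ) / n)..(((i : ℝ) + 1) / n), m x) +
          1 / n * μ i * (b₁ * (1 / n)) = 1 / n * (r i - Mt) := by
        have : (∫ x in ((i : ℝ) / n)..(((i : ℝ) + 1) / n), m x) = M i := rfl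
        rw [this]
        simp only [hr, hd]
        field_simp
        ring
      rw [h5]
      ring
    rw [Finset.sum_congr rfl hcell, Finset.sum_add_distrib, h1, Finset.sum_add_distrib,
      ← Finset.mul_sum, ← Finset.mul_sum, hr0, hR]
    ring
  have hK : (0 : ℝ) < 1 + b₂ := by linarith
  have hyoung : 2 / (1 + b₂) * R ≤ ∑ i ∈ Finset.range n,
      (∫ x in ((i : ℝ) / n)..(((i : ℝ) + 1) / n), (X i x) ^ 2) + 1 / (1 + b₂) * R := by
    have h1 : 1 / (1 + b₂) * R = ∑ i ∈ Finset.range n,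
        (1 / (1 + b₂) * r i) ^ 2 * ((1 + b₂) / n) := by
      rw [hR, Finset.mul_sum, Finset.mul_sum]
      refine Finset.sum_congr rfl fun i _ => ?_
      field_simp
    have h2 : 2 / (1 + b₂) * R = ∑ i ∈ Finset.range n, 2 * (1 / (1 + b₂) * r i) *
        (∫ x in ((i : ℝ) / n)..(((i : ℝ) + 1) / n), X i x * W i x) := by
      rw [← hXW, Finset.mul_sum]
      refine Finset.sum_congr rfl fun i _ => ?_
      ring
    rw [h1, h2, ← Finset.sum_add_distrib]
    refine Finset.sum_le_sum fun i hi => ?_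
    have hb := bubble_cell hB hB' i
    have h := cell_young (node_lt hn i).le (1 / (1 + b₂) * r i)
      (hXc i (Finset.mem_range.1 hi)) (hWc i)
    have h3 := cell_bubble_sq (node_lt hn i).le (1 / n) hb.1 hb.2 (hBl i) (hBr i)
    rw [integral_shift_cell (fun x => B' x ^ 2), hB'int, hlen] at h3
    have h4 : ∫ x in ((i : ℝ) / n)..(((i : ℝ) + 1) / n), (W i x) ^ 2 = (1 + b₂) / n := by
      simp only [hW]
      rw [h3]; field_simp
    rwa [h4] at h
  have hflux : ∑ i ∈ Finset.range n,
      (∫ x in ((i : ℝ) / n)..(((i : ℝ) + 1) / n), (X i x) ^ 2) ≤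
      d ^ 2 * (∑ i ∈ Finset.range n, D i) + sigmaSq n e := by
    rw [sigmaSq_eq hn (v := e) (hucont.sub hph.1) (A := A) (fun _ => rfl), variance_eq hn, ← hc]
    have htel := sum_nodes hn (fun x => (e x - c) ^ 2)
    simp only [he0, he1] at htel
    rw [sub_self] at htel
    have h1 : d ^ 2 * (∑ i ∈ Finset.range n, D i) +
        1 / n * ∑ i ∈ Finset.range n, (n * A i - c) ^ 2 =
        ∑ i ∈ Finset.range n, (d ^ 2 * D i + 1 / n * (n * A i - c) ^ 2 -
          ε * ((e (((i : ℝ) + 1) / n) - c) ^ 2 - (e ((i : ℝ) / n) - c) ^ 2)) := by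
      rw [Finset.sum_sub_distrib, ← Finset.mul_sum, htel, Finset.sum_add_distrib,
        Finset.mul_sum, Finset.mul_sum]
      ring
    rw [h1]
    refine Finset.sum_le_sum fun i hi => ?_
    have hi' := Finset.mem_range.1 hi
    have h := cell_flux_bound (node_lt hn i) ε c (hed i hi')
      ((huc.mono (cell_subset hi')).sub continuousOn_const)
    rw [hlen] at h
    have h2 : A i / (1 / n) = n * A i := by field_simp
    have h3 : 0 ≤ D i := intervalIntegral.integral_nonneg (node_lt hn i).le
      fun x _ => sq_nonneg _
    have h4 := mul_le_mul_of_nonneg_right hrestr h3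
    change _ ≤ (ε ^ 2 + (1 / (n : ℝ)) ^ 2 / Real.pi ^ 2) * D i +
      1 / n * (A i / (1 / n) - c) ^ 2 - _ at h
    rw [h2] at h
    linarith
  rw [hRN]
  have h1 : 1 / (1 + b₂) * R ≤ d ^ 2 * (∑ i ∈ Finset.range n, D i) + sigmaSq n e := by
    have : 2 / (1 + b₂) * R = 1 / (1 + b₂) * R + 1 / (1 + b₂) * R := by ring
    linarith
  rwa [one_div, inv_mul_le_iff₀ hK] at h1

/-- The squared norm of `g + t m`, where `g = u - u_h` and `m = u_h - p_h`, is a quadratic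
polynomial in `t`; here `g + t m = u - ((1 - t) u_h + t p_h)`. -/
theorem norm_expand {n : ℕ} (hn : 0 < n) (d : ℝ) {u u' : ℝ → ℝ}
    (hu : ContinuousOn u (Set.Icc 0 1)) (huc : ContinuousOn u' (Set.Icc 0 1))
    {uh ph : ℝ → ℝ} (huh : InMh n uh) (hph : InMh n ph) :
    ∃ b : ℝ, ∀ t : ℝ,
      d ^ 2 * (∑ i ∈ Finset.range n, ∫ x in ((i : ℝ) / n)..(((i : ℝ) + 1) / n),
          (u' x - cellSlope n (fun x => (1 - t) * uh x + t * ph x) i) ^ 2) +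
        sigmaSq n (fun x => u x - ((1 - t) * uh x + t * ph x)) =
      (d ^ 2 * (∑ i ∈ Finset.range n, ∫ x in ((i : ℝ) / n)..(((i : ℝ) + 1) / n),
          (u' x - cellSlope n uh i) ^ 2) + sigmaSq n (fun x => u x - uh x)) +
        2 * t * b +
        t ^ 2 * (d ^ 2 *
          ((1 / n) * ∑ i ∈ Finset.range n, (cellSlope n uh i - cellSlope n ph i) ^ 2) +
            sigmaSq n (fun x => uh x - ph x)) := by
  set A : ℕ → ℝ := fun i => ∫ x in ((i : ℝ) / n)..(((i : ℝ) + 1) / n), (u x - uh x) with hA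
  set M : ℕ → ℝ := fun i => ∫ x in ((i : ℝ) / n)..(((i : ℝ) + 1) / n), (uh x - ph x) with hM
  set μ : ℕ → ℝ := fun i => cellSlope n uh i - cellSlope n ph i with hμ
  set J : ℕ → ℝ := fun i => ∫ x in ((i : ℝ) / n)..(((i : ℝ) + 1) / n),
    (u' x - cellSlope n uh i) with hJ
  refine ⟨d ^ 2 * (∑ i ∈ Finset.range n, μ i * J i) +
    ((1 / n) * (∑ i ∈ Finset.range n, (n * A i) * (n * M i)) -
      (∑ i ∈ Finset.range n, A i) * ∑ i ∈ Finset.range n, M i), fun t => ?_⟩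
  have hAt : ∀ i ∈ Finset.range n, (∫ x in ((i : ℝ) / n)..(((i : ℝ) + 1) / n),
      (u x - ((1 - t) * uh x + t * ph x))) = A i + t * M i := by
    intro i hi
    have hsub := cell_subset (Finset.mem_range.1 hi)
    have h := integral_lin3 (node_lt hn i).le (f := fun x => u x - uh x)
      (g := fun x => uh x - ph x) (k := fun _ => (0 : ℝ)) 1 t 0
      ((hu.sub huh.1).mono hsub) ((huh.1.sub hph.1).mono hsub) continuousOn_const
    have h' : (∫ x in ((i : ℝ) / n)..(((i : ℝ) + 1) / n),
        (u x - ((1 - t) * uh x + t * ph x))) = ∫ x in ((i : ℝ) / n)..(((i : ℝ) + 1) / n),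
        (1 * (u x - uh x) + t * (uh x - ph x) + 0 * 0) := by
      congr 1; ext x; ring
    rw [h', h]; ring
  have hDt : ∀ i ∈ Finset.range n, (∫ x in ((i : ℝ) / n)..(((i : ℝ) + 1) / n),
      (u' x - cellSlope n (fun x => (1 - t) * uh x + t * ph x) i) ^ 2) =
      (∫ x in ((i : ℝ) / n)..(((i : ℝ) + 1) / n), (u' x - cellSlope n uh i) ^ 2) +
        2 * t * (μ i * J i) + t ^ 2 * ((1 / n) * μ i ^ 2) := by
    intro i hi
    have hsub := cell_subset (Finset.mem_range.1 hi)
    have hu1 := huc.mono hsub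
    have h := integral_lin3 (node_lt hn i).le (f := fun x => (u' x - cellSlope n uh i) ^ 2)
      (g := fun x => u' x - cellSlope n uh i) (k := fun _ => (1 : ℝ)) 1 (2 * t * μ i)
      (t ^ 2 * μ i ^ 2) (by fun_prop) (by fun_prop) continuousOn_const
    have h' : (∫ x in ((i : ℝ) / n)..(((i : ℝ) + 1) / n),
        (u' x - cellSlope n (fun x => (1 - t) * uh x + t * ph x) i) ^ 2) =
        ∫ x in ((i : ℝ) / n)..(((i : ℝ) + 1) / n), (1 * (u' x - cellSlope n uh i) ^ 2 +
          (2 * t * μ i) * (u' x - cellSlope n uh i) + (t ^ 2 * μ i ^ 2) * 1) := by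
      congr 1; ext x; simp only [hμ, cellSlope]; ring
    rw [h', h]
    simp only [intervalIntegral.integral_const, smul_eq_mul, ← sub_div, add_sub_cancel_left]
    ring
  rw [sigmaSq_eq hn (v := fun x => u x - ((1 - t) * uh x + t * ph x))
      (hu.sub (huh.lin hph (1 - t) t).1) (fun _ => rfl),
    sigmaSq_eq hn (v := fun x => u x - uh x) (hu.sub huh.1) (A := A) (fun _ => rfl),
    sigmaSq_eq hn (v := fun x => uh x - ph x) (huh.1.sub hph.1) (A := M) (fun _ => rfl),
    Finset.sum_congr rfl hDt]
  have h1 : ∑ i ∈ Finset.range n, (n * ∫ x in ((i : ℝ) / n)..(((i : ℝ) + 1) / n),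
        (u x - ((1 - t) * uh x + t * ph x))) ^ 2 =
      ∑ i ∈ Finset.range n, (n * A i) ^ 2 + 2 * t * ∑ i ∈ Finset.range n, (n * A i) * (n * M i) +
        t ^ 2 * ∑ i ∈ Finset.range n, (n * M i) ^ 2 := by
    simp only [Finset.mul_sum, ← Finset.sum_add_distrib]
    exact Finset.sum_congr rfl fun i hi => by rw [hAt i hi]; ring
  rw [h1, Finset.sum_congr rfl hAt]
  have h2 : ∑ i ∈ Finset.range n, (cellSlope n uh i - cellSlope n ph i) ^ 2 =
      ∑ i ∈ Finset.range n, μ i ^ 2 := rfl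
  rw [h2]
  -- `G` is opaque to `ring`, which would otherwise normalize inside the integrals
  generalize hG : (fun i : ℕ => ∫ x in ((i : ℝ) / n)..(((i : ℝ) + 1) / n),
    (u' x - cellSlope n uh i) ^ 2) = G
  have hGi : ∀ i : ℕ, (∫ x in ((i : ℝ) / n)..(((i : ℝ) + 1) / n),
    (u' x - cellSlope n uh i) ^ 2) = G i := fun i => congrFun hG i
  simp only [hGi]
  clear_value A M μ J
  simp only [Finset.sum_add_distrib, ← Finset.mul_sum]
  ring

theorem integral_error_sq {n : ℕ} (hn : 0 < n) {u' : ℝ → ℝ}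
    (huc : ContinuousOn u' (Set.Icc 0 1)) {p : ℝ → ℝ} (hp : InMh n p) :
    ∫ x in (0:ℝ)..1, (u' x - deriv p x) ^ 2 = ∑ i ∈ Finset.range n,
      ∫ x in ((i : ℝ) / n)..(((i : ℝ) + 1) / n), (u' x - cellSlope n p i) ^ 2 := by
  refine integral_eq_sum_cells hn (fun i x => (u' x - cellSlope n p i) ^ 2) (fun i hi => ?_)
    (fun i hi x hx => ?_)
  · have := huc.mono (cell_subset hi)
    fun_prop
  · rw [deriv_eq_of_within (v' := fun _ => cellSlope n p i) (hp.hasDerivWithinAt hi) x hx]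

/-- Quasi-optimal error estimate (in rescaled form) for the
general bubble upwinding Petrov-Galerkin discretization of
`-εu'' + u' = f`, `u(0) = u(1) = 0`:
`(ε + hb₁)²|u-u_h|² + σ(u-u_h)² ≤ (1+b₂)((ε + hb₁)²|u-p_h|² + σ(u-p_h)²)`. -/
theorem stmt15 (n : ℕ) (hn : 2 ≤ n)
    (B B' : ℝ → ℝ) (b₁ b₂ : ℝ) (hb₁ : 0 < b₁) (hb₂ : 0 < b₂)
    (hB : ∀ x ∈ Set.Icc (0:ℝ) (1 / n), HasDerivWithinAt B (B' x) (Set.Icc 0 (1 / n)) x)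
    (hB' : ContinuousOn B' (Set.Icc 0 (1 / n)))
    (hB0 : B 0 = 0) (hBh : B (1 / n) = 0)
    (hBint : ∫ x in (0:ℝ)..(1 / n), B x = b₁ * (1 / n))
    (hB'int : ∫ x in (0:ℝ)..(1 / n), (B' x)^2 = b₂ / (1 / n))
    (ε : ℝ) (hε : 0 < ε)
    (hrestr : ε^2 + (1 / (n : ℝ))^2 / Real.pi^2 ≤ (ε + (1 / (n : ℝ)) * b₁)^2)
    (f : ℝ → ℝ) (hf : ContinuousOn f (Set.Icc 0 1))
    (u u' u'' : ℝ → ℝ)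
    (hu : ∀ x ∈ Set.Icc (0:ℝ) 1, HasDerivWithinAt u (u' x) (Set.Icc 0 1) x)
    (hu' : ∀ x ∈ Set.Icc (0:ℝ) 1, HasDerivWithinAt u' (u'' x) (Set.Icc 0 1) x)
    (hu'' : ContinuousOn u'' (Set.Icc 0 1))
    (hode : ∀ x ∈ Set.Icc (0:ℝ) 1, -ε * u'' x + u' x = f x)
    (hu0 : u 0 = 0) (hu1 : u 1 = 0)
    (uh : ℝ → ℝ) (huh : InMh n uh)
    (hupg : ∀ v : ℝ → ℝ, (∃ w : ℝ → ℝ, InMh n w ∧ v = bubbleMod n B w) →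
      ε * (∫ x in (0:ℝ)..1, deriv uh x * deriv v x) +
        (∫ x in (0:ℝ)..1, deriv uh x * v x) = ∫ x in (0:ℝ)..1, f x * v x) :
    ∀ ph : ℝ → ℝ, InMh n ph →
      (ε + (1 / (n : ℝ)) * b₁)^2 * (∫ x in (0:ℝ)..1, (u' x - deriv uh x)^2) +
          sigmaSq n (fun x => u x - uh x) ≤
        (1 + b₂) * ((ε + (1 / (n : ℝ)) * b₁)^2 *
            (∫ x in (0:ℝ)..1, (u' x - deriv ph x)^2) +
          sigmaSq n (fun x => u x - ph x)) := by
  intro ph hph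
  have hn0 : 0 < n := by omega
  have huc : ContinuousOn u' (Set.Icc 0 1) := fun x hx => (hu' x hx).continuousWithinAt
  have hucont : ContinuousOn u (Set.Icc 0 1) := fun x hx => (hu x hx).continuousWithinAt
  rw [integral_error_sq hn0 huc huh, integral_error_sq hn0 huc hph]
  set d := ε + (1 / (n : ℝ)) * b₁ with hd
  obtain ⟨b, hexp⟩ := norm_expand hn0 d hucont huc huh hph
  have hone := hexp 1
  simp only [sub_self, zero_mul, one_mul, zero_add, one_pow, mul_one] at hone
  rw [hone]
  -- at this `t`, stability for `(1 - t) u_h + t p_h` is a multiple of the desired inequality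
  set t := (1 + b₂) / b₂ with ht
  have hstab := projection_stability hn0 hb₂ hB hB' hB0 hBh hBint hB'int hrestr hu huc hu0 hu1
    huh (fun w hw => galerkin_orthogonality hn0 hB hB' hB0 hBh hu hu' hu'' hode huh hw
      (hupg _ ⟨w, hw, rfl⟩)) (huh.lin hph (1 - t) t)
  rw [← hd, hexp t] at hstab
  have h1 : ∑ i ∈ Finset.range n,
      (cellSlope n uh i - cellSlope n (fun x => (1 - t) * uh x + t * ph x) i) ^ 2 =
      t ^ 2 * ∑ i ∈ Finset.range n, (cellSlope n uh i - cellSlope n ph i) ^ 2 := by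
    rw [Finset.mul_sum]
    refine Finset.sum_congr rfl fun i _ => ?_
    simp only [cellSlope]; ring
  have h2 : sigmaSq n (fun x => uh x - ((1 - t) * uh x + t * ph x)) =
      t ^ 2 * sigmaSq n (fun x => uh x - ph x) := by
    have : (fun x => uh x - ((1 - t) * uh x + t * ph x)) = fun x => t * (uh x - ph x) := by
      ext x; ring
    rw [this]
    have hs : ∀ I : ℕ → ℝ, ∑ i ∈ Finset.range n, (n * (t * I i)) ^ 2 =
        t ^ 2 * ∑ i ∈ Finset.range n, (n * I i) ^ 2 := fun I => by
      rw [Finset.mul_sum]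
      exact Finset.sum_congr rfl fun i _ => by ring
    simp only [sigmaSq, intervalIntegral.integral_const_mul, hs]
    ring
  rw [h1, h2] at hstab
  set a := d ^ 2 * (∑ i ∈ Finset.range n, ∫ x in ((i : ℝ) / n)..(((i : ℝ) + 1) / n),
    (u' x - cellSlope n uh i) ^ 2) + sigmaSq n (fun x => u x - uh x)
  set c := d ^ 2 *
    ((1 / n) * ∑ i ∈ Finset.range n, (cellSlope n uh i - cellSlope n ph i) ^ 2) +
      sigmaSq n (fun x => uh x - ph x) with hc
  have h3 : t ^ 2 * c ≤ (1 + b₂) * (a + 2 * t * b + t ^ 2 * c) := by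
    rw [hc] at hstab ⊢
    linarith
  have h4 : (1 + b₂) * (a + 2 * t * b + t ^ 2 * c) - t ^ 2 * c =
      t * ((1 + b₂) * (a + 2 * b + c) - a) := by
    rw [ht]; field_simp; ring
  have h5 : 0 ≤ t * ((1 + b₂) * (a + 2 * b + c) - a) := by linarith
  have h6 := nonneg_of_mul_nonneg_right h5 (by positivity)
  linarith
end

section
/- Let ε > 0 and h > 0, set g₀ := tanh(h/(2ε)) and l₀ := (1 + g₀)/(2·g₀), and define B : [0,h] → ℝ by B(x) = l₀·(1 − e^{−x/ε}) − x/h. Then: (a) B(0) = B(h) = 0; (b) −ε·B″(x) − B′(x) = 1/h for every x ∈ [0,h]; (c) ∫_0^h B(x) dx = h/(2·g₀) − ε; and (d) ∫_0^h (B′(x))² dx = (1/(2ε))·( 1/g₀ − 2ε/h ). -/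
/-!
With `E = exp (-h/ε)` one has `g₀ = (1 - E) / (1 + E)`, hence `l₀ = 1 / (1 - E)`. The derivatives
of `B` and antiderivatives of `B` and `(B')²` are explicit, so each claim becomes, by the
fundamental theorem of calculus, a rational identity in `E`, `ε` and `h`.
-/

lemma tanh_half_eq (y : ℝ) :
    Real.tanh (y / 2) = (1 - Real.exp (-y)) / (1 + Real.exp (-y)) := by
  have hy : Real.exp (-y) = Real.exp (-(y / 2)) * Real.exp (-(y / 2)) := by
    rw [← Real.exp_add]; ring_nf
  have h1 : Real.exp (y / 2) * Real.exp (-(y / 2)) = 1 := by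
    rw [← Real.exp_add]; simp
  have p1 := Real.exp_pos (y / 2)
  have p2 := Real.exp_pos (-(y / 2))
  rw [Real.tanh_eq_sinh_div_cosh, Real.sinh_eq, Real.cosh_eq, hy,
    div_eq_div_iff (by positivity) (by positivity)]
  linear_combination Real.exp (-(y / 2)) * h1

/-- Properties of the exponential bubble
`B(x) = l₀(1 - e^{-x/ε}) - x/h` with `g₀ = tanh(h/(2ε))`, `l₀ = (1+g₀)/(2g₀)`:
(a) `B(0) = B(h) = 0`; (b) `-εB'' - B' = 1/h` on `[0,h]`;
(c) `∫_0^h B = h/(2g₀) - ε`; (d) `∫_0^h (B')² = (1/(2ε))(1/g₀ - 2ε/h)`. -/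
theorem stmt18 (ε h : ℝ) (hε : 0 < ε) (hh : 0 < h)
    (g₀ l₀ : ℝ) (hg₀ : g₀ = Real.tanh (h / (2 * ε)))
    (hl₀ : l₀ = (1 + g₀) / (2 * g₀))
    (B : ℝ → ℝ) (hB : ∀ x : ℝ, B x = l₀ * (1 - Real.exp (-x / ε)) - x / h) :
    (B 0 = 0 ∧ B h = 0) ∧
    (∀ x ∈ Set.Icc (0:ℝ) h, -ε * deriv (deriv B) x - deriv B x = 1 / h) ∧
    (∫ x in (0:ℝ)..h, B x = h / (2 * g₀) - ε) ∧
    (∫ x in (0:ℝ)..h, (deriv B x)^2 = (1 / (2 * ε)) * (1 / g₀ - 2 * ε / h)) := by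
  have hexp : ∀ x : ℝ, HasDerivAt (fun x : ℝ => Real.exp (-x / ε))
      (Real.exp (-x / ε) * (-1 / ε)) x := fun x =>
    ((hasDerivAt_id x).neg.div_const ε).exp
  have hBfun : B = fun x => l₀ * (1 - Real.exp (-x / ε)) - x / h := funext hB
  have hcont : Continuous B := by rw [hBfun]; fun_prop
  have hd : deriv B = fun x => l₀ / ε * Real.exp (-x / ε) - 1 / h := by
    funext x
    rw [hBfun]
    refine HasDerivAt.deriv ?_
    refine HasDerivAt.congr_deriv ((((hexp x).const_sub 1).const_mul l₀).sub ((hasDerivAt_id x).div_const h)) ?_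
    ring
  have hdcont : Continuous (deriv B) := by rw [hd]; fun_prop
  have hdd : ∀ x, deriv (deriv B) x = l₀ / ε * (Real.exp (-x / ε) * (-1 / ε)) := by
    intro x
    rw [hd]
    exact (((hexp x).const_mul (l₀ / ε)).sub_const (1 / h)).deriv
  have hE1 : Real.exp (-h / ε) < 1 := by
    rw [Real.exp_lt_one_iff]
    exact div_neg_of_neg_of_pos (neg_neg_of_pos hh) hε
  have hE0 : 0 < Real.exp (-h / ε) := Real.exp_pos _
  have hg : g₀ = (1 - Real.exp (-h / ε)) / (1 + Real.exp (-h / ε)) := by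
    have := tanh_half_eq (h / ε)
    rw [← neg_div, div_div, mul_comm ε 2] at this
    rw [hg₀, this]
  have hI1 : ∫ x in (0:ℝ)..h, B x =
      (l₀ * (h + ε * Real.exp (-h / ε)) - h ^ 2 / (2 * h)) -
        (l₀ * (0 + ε * Real.exp (-0 / ε)) - 0 ^ 2 / (2 * h)) := by
    refine intervalIntegral.integral_eq_sub_of_hasDerivAt
      (f := fun x => l₀ * (x + ε * Real.exp (-x / ε)) - x ^ 2 / (2 * h)) (fun x _ => ?_)
      (hcont.intervalIntegrable _ _)
    refine HasDerivAt.congr_deriv ((((hasDerivAt_id x).add ((hexp x).const_mul ε)).const_mul l₀).sub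
      ((hasDerivAt_pow 2 x).div_const (2 * h))) ?_
    rw [hB]
    field_simp
    ring
  have hI2 : ∫ x in (0:ℝ)..h, (deriv B x) ^ 2 =
      (-l₀ ^ 2 / (2 * ε) * Real.exp (-h / ε) ^ 2 + 2 * l₀ / h * Real.exp (-h / ε) + h / h ^ 2) -
        (-l₀ ^ 2 / (2 * ε) * Real.exp (-0 / ε) ^ 2 + 2 * l₀ / h * Real.exp (-0 / ε)
          + 0 / h ^ 2) := by
    refine intervalIntegral.integral_eq_sub_of_hasDerivAt
      (f := fun x => -l₀ ^ 2 / (2 * ε) * Real.exp (-x / ε) ^ 2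
        + 2 * l₀ / h * Real.exp (-x / ε) + x / h ^ 2) (fun x _ => ?_)
      ((hdcont.pow 2).intervalIntegrable _ _)
    refine HasDerivAt.congr_deriv (((((hexp x).pow 2).const_mul (-l₀ ^ 2 / (2 * ε))).add
      ((hexp x).const_mul (2 * l₀ / h))).add ((hasDerivAt_id x).div_const (h ^ 2))) ?_
    rw [hd]
    field_simp
    ring
  have hz : Real.exp (-0 / ε) = 1 := by simp
  rw [hI1, hI2, hB, hB, hz]
  simp only [hdd]
  rw [hd]
  generalize Real.exp (-h / ε) = E at *
  have hne : 1 - E ≠ 0 := by linarith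
  have hne' : 1 + E ≠ 0 := by linarith
  have hl : l₀ = 1 / (1 - E) := by
    rw [hl₀, hg]
    field_simp
    ring
  refine ⟨⟨by simp, ?_⟩, fun x _ => ?_, ?_, ?_⟩
  · rw [hl]
    field_simp
    ring
  · field_simp
    ring
  · rw [hl, hg]
    field_simp
    ring
  · rw [hl, hg]
    field_simp
    ring
end
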